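/- arXiv:1404.1692 — 6 statements merged into one kernel-verified Lean document; each statement's English description precedes it below -/
import Mathlib

section
/- Fix θ>−1. The function x ↦ f(x;θ) = log(1 + e^{−x^{−α}}(e^{−θx^{−α}} − 1)) + θx^{−α} − θx^{−2α} is integrable on (0,∞); in particular it is integrable near x=0 and near x=∞. -/
open MeasureTheory Filter

open Asymptotics Topology in
/-- Cubic Taylor bound at zero. -/
lemma aux_zero (θ : ℝ) :
    (fun u : ℝ => Real.log (1 + Real.exp (-u) * (Real.exp (-θ * u) - 1)) + θ * u - θ * u ^ 2)
      =O[𝓝 0] fun u => u ^ 3 := by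
  have hE : ∀ c : ℝ, (fun u : ℝ => Real.exp (c * u) - (1 + c * u + (c * u) ^ 2 / 2))
      =O[𝓝 0] fun u => u ^ 3 := by
    intro c
    have h := Real.exp_sub_sum_range_isBigO_pow 3
    have ht : Tendsto (fun u : ℝ => c * u) (𝓝 0) (𝓝 0) := by
      have : Continuous (fun u : ℝ => c * u) := by fun_prop
      simpa using this.tendsto 0
    have h2 := h.comp_tendsto ht
    have h3 : ((fun u : ℝ => u ^ 3) ∘ fun u : ℝ => c * u) =O[𝓝 0] fun u : ℝ => u ^ 3 := by
      have : ((fun u : ℝ => u ^ 3) ∘ fun u : ℝ => c * u) = fun u : ℝ => c ^ 3 * u ^ 3 := by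
        funext u; simp; ring
      rw [this]
      exact isBigO_const_mul_self _ _ _
    refine (h2.trans h3).congr_left ?_
    intro u
    simp [Finset.sum_range_succ]
  set y : ℝ → ℝ := fun u => Real.exp (-(1 + θ) * u) - Real.exp (-1 * u) with hy
  have hpow : ∀ {m n : ℕ}, m ≤ n → (fun u : ℝ => u ^ n) =O[𝓝 0] fun u : ℝ => u ^ m := by
    intro m n hmn
    have h1 : (fun u : ℝ => u ^ (n - m)) =O[𝓝 0] fun _ => (1 : ℝ) := by
      have : Continuous (fun u : ℝ => u ^ (n - m)) := by fun_prop
      exact (this.tendsto 0).isBigO_one ℝ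
    refine ((isBigO_refl (fun u : ℝ => u ^ m) (𝓝 0)).mul h1).congr ?_ ?_
    · intro u; rw [← pow_add]; congr 1; omega
    · intro u; simp
  have h3 : (fun u => y u - (-θ * u + (θ + θ ^ 2 / 2) * u ^ 2)) =O[𝓝 0] fun u => u ^ 3 := by
    refine ((hE (-(1 + θ))).sub (hE (-1))).congr_left ?_
    intro u; simp only [hy]; ring
  have h2 : (fun u => y u + θ * u) =O[𝓝 0] fun u => u ^ 2 := by
    refine ((h3.trans (hpow (by norm_num : 2 ≤ 3))).add
      (isBigO_const_mul_self (θ + θ ^ 2 / 2) (fun u : ℝ => u ^ 2) _)).congr_left ?_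
    intro u; ring
  have hid : (fun u : ℝ => u) =O[𝓝 0] fun u : ℝ => u ^ 1 := by
    simpa using isBigO_refl (fun u : ℝ => u) (𝓝 0)
  have h1 : y =O[𝓝 0] fun u => u ^ 1 := by
    refine ((h2.trans (hpow (by norm_num : 1 ≤ 2))).sub (hid.const_mul_left θ)).congr_left ?_
    intro u; ring
  have h1' : (fun u => y u - θ * u) =O[𝓝 0] fun u => u ^ 1 := h1.sub (hid.const_mul_left θ)
  have hsq : (fun u => y u ^ 2 - θ ^ 2 * u ^ 2) =O[𝓝 0] fun u => u ^ 3 := by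
    refine (h2.mul h1').congr ?_ ?_
    · intro u; ring
    · intro u; ring
  have hy0 : Tendsto y (𝓝 0) (𝓝 0) := by
    have : Continuous y := by fun_prop
    simpa [hy] using this.tendsto 0
  have hlog : (fun u => Real.log (1 + y u) - (y u - y u ^ 2 / 2)) =O[𝓝 0] fun u => u ^ 3 := by
    have hb : (fun u => Real.log (1 + y u) - (y u - y u ^ 2 / 2)) =O[𝓝 0] fun u => y u ^ 3 := by
      refine IsBigO.of_bound 2 ?_
      have hev : ∀ᶠ u in 𝓝 (0 : ℝ), |y u| < 1 / 2 := by
        have := hy0.abs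
        rw [abs_zero] at this
        exact this.eventually_lt_const (by norm_num)
      filter_upwards [hev] with u hu
      have h := Real.abs_log_sub_add_sum_range_le (x := -y u) (by rw [abs_neg]; linarith) 2
      simp only [Finset.sum_range_succ, Finset.sum_range_zero, abs_neg, sub_neg_eq_add] at h
      norm_num at h
      rw [Real.norm_eq_abs, Real.norm_eq_abs, abs_pow]
      have e : Real.log (1 + y u) - (y u - y u ^ 2 / 2)
        = -y u + y u ^ 2 / 2 + Real.log (1 + y u) := by ring
      rw [e]
      refine h.trans ?_
      rw [div_le_iff₀ (by linarith)]
      have : 0 ≤ |y u| ^ 3 := by positivity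
      nlinarith
    refine hb.trans ?_
    simpa using h1.pow 3
  refine ((hlog.add h3).sub (hsq.const_mul_left (1 / 2))).congr_left ?_
  intro u
  have e : Real.exp (-u) * (Real.exp (-θ * u) - 1) = y u := by
    simp only [hy]
    rw [mul_sub, ← Real.exp_add]
    ring_nf
  rw [e]; ring

open Asymptotics Topology in
lemma aux_top (θ : ℝ) (hθ : -1 < θ) :
    (fun u : ℝ => Real.log (1 + Real.exp (-u) * (Real.exp (-θ * u) - 1)) + θ * u - θ * u ^ 2)
      =O[atTop] fun u => u ^ 2 := by
  have hc : ∀ c : ℝ, 0 < c → Tendsto (fun u : ℝ => Real.exp (-(c * u))) atTop (𝓝 0) := by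
    intro c hc
    exact Real.tendsto_exp_neg_atTop_nhds_zero.comp (tendsto_id.const_mul_atTop hc)
  have hA : Tendsto (fun u : ℝ => 1 + Real.exp (-u) * (Real.exp (-θ * u) - 1)) atTop (𝓝 1) := by
    have := (tendsto_const_nhds (x := (1 : ℝ))).add ((hc (1 + θ) (by linarith)).sub (hc 1 one_pos))
    simp only [sub_zero, add_zero] at this
    refine this.congr ?_
    intro u
    rw [mul_sub, ← Real.exp_add]
    ring_nf
  have hp : ∀ m : ℕ, m ≤ 2 → (fun u : ℝ => u ^ m) =O[atTop] fun u : ℝ => u ^ 2 := by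
    intro m hm
    refine IsBigO.of_bound 1 ?_
    filter_upwards [eventually_ge_atTop (1 : ℝ)] with u hu
    have h0 : 0 ≤ u := by linarith
    rw [Real.norm_of_nonneg (by positivity), Real.norm_of_nonneg (by positivity), one_mul]
    exact pow_le_pow_right₀ hu hm
  have hl := (hA.log one_ne_zero).isBigO_one ℝ
  have h0 := hp 0 (by norm_num)
  have h1 := hp 1 (by norm_num)
  simp only [pow_zero] at h0
  simp only [pow_one] at h1
  exact ((hl.trans h0).add (h1.const_mul_left θ)).sub ((hp 2 le_rfl).const_mul_left θ)



/-- Lemma 3.1, integrability of `f(·;θ)`.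
Fix `θ > -1`. The function
`x ↦ f(x;θ) = log(1 + e^{-x^{-α}}(e^{-θ x^{-α}} - 1)) + θ x^{-α} - θ x^{-2α}`
is integrable on `(0,∞)`. -/
theorem f_integrable
    (τ α : ℝ) (hτ : τ ∈ Set.Ioo (3 : ℝ) 4) (hα : α = 1 / (τ - 1))
    (θ : ℝ) (hθ : -1 < θ) :
    MeasureTheory.IntegrableOn
      (fun x : ℝ =>
        Real.log (1 + Real.exp (-x ^ (-α)) * (Real.exp (-θ * x ^ (-α)) - 1))
          + θ * x ^ (-α) - θ * x ^ (-(2 * α)))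
      (Set.Ioi (0 : ℝ)) := by
  
  obtain ⟨h3, h4⟩ := hτ
  have ha0 : 0 < α := by rw [hα]; apply div_pos <;> linarith
  have ha1 : 2 * α < 1 := by
    have : α < 1 / 2 := by
      rw [hα]; exact one_div_lt_one_div_of_lt (by norm_num) (by linarith)
    linarith
  have ha2 : 1 < 3 * α := by
    have : 1 / 3 < α := by
      rw [hα]; exact one_div_lt_one_div_of_lt (by linarith) (by linarith)
    linarith
  have hpw : ∀ (n : ℕ) (x : ℝ), 0 < x → (x ^ (-α)) ^ n = x ^ (-(n * α)) := by
    intro n x hx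
    rw [← Real.rpow_natCast, ← Real.rpow_mul hx.le]
    ring_nf
  have hm := mellin_convergent_of_isBigO_scalar (a := 3 * α) (b := 2 * α) (s := 1) (f :=
      (fun x : ℝ =>
        Real.log (1 + Real.exp (-x ^ (-α)) * (Real.exp (-θ * x ^ (-α)) - 1))
          + θ * x ^ (-α) - θ * x ^ (-(2 * α)))) ?_ ?_ ha2 ?_ ha1
  · simpa using hm
  · refine ContinuousOn.locallyIntegrableOn ?_ measurableSet_Ioi
    have hr : ∀ c : ℝ, ContinuousOn (fun x : ℝ => x ^ c) (Set.Ioi 0) := by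
      intro c x hx
      exact (Real.continuousAt_rpow_const x c (Or.inl (ne_of_gt hx))).continuousWithinAt
    have h1 := hr (-α)
    have h2 := hr (-(2 * α))
    refine ContinuousOn.sub (ContinuousOn.add (ContinuousOn.log (by fun_prop) ?_) (by fun_prop))
      (by fun_prop)
    intro x hx
    have hu : 0 < x ^ (-α) := Real.rpow_pos_of_pos hx _
    have h5 : Real.exp (-x ^ (-α)) < 1 := by rw [← Real.exp_zero]; exact Real.exp_lt_exp.2 (by linarith)
    have h6 := mul_pos (Real.exp_pos (-x ^ (-α))) (Real.exp_pos (-θ * x ^ (-α)))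
    apply ne_of_gt
    linarith
  · have h := (aux_zero θ).comp_tendsto (tendsto_rpow_neg_atTop ha0)
    refine h.congr' ?_ ?_
    · filter_upwards [eventually_gt_atTop 0] with x hx
      have := hpw 2 x hx
      push_cast at this
      simp only [Function.comp, this]
    · filter_upwards [eventually_gt_atTop 0] with x hx
      have := hpw 3 x hx
      push_cast at this
      simp only [Function.comp, this]
  · have ht : Tendsto (fun x : ℝ => x ^ (-α)) (nhdsWithin 0 (Set.Ioi 0)) atTop :=
      tendsto_rpow_neg_nhdsGT_zero (by linarith)
    have h := (aux_top θ hθ).comp_tendsto ht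
    refine h.congr' ?_ ?_
    · filter_upwards [self_mem_nhdsWithin] with x hx
      have := hpw 2 x hx
      push_cast at this
      simp only [Function.comp, this]
    · filter_upwards [self_mem_nhdsWithin] with x hx
      have := hpw 2 x hx
      push_cast at this
      simp only [Function.comp, this]
end

section
/- Let g:(0,∞)→ℝ be differentiable and suppose there exist γ>−1 and a,b≥0 with |g'(y)| ≤ a y^{γ} e^{−by} for all y>0. Then for every α>0 there exists a constant c=c(α,γ), not depending on g, a, b or u, such that for all u>0: |Σ_{i=2}^∞ [ g(u i^{−α}) − ∫_i^{i+1} g(u x^{−α}) dx ]| ≤ c · a · min(u, b^{−1})^{1+γ}, where b^{−1} is interpreted as +∞ (so min(u,b^{−1})=u) when b=0. -/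
open MeasureTheory Filter

lemma aux_intervalIntegrable (γ : ℝ) (hγ : -1 < γ) (b x y : ℝ) :
    IntervalIntegrable (fun t : ℝ => t ^ γ * Real.exp (-b * t)) volume x y :=
  (intervalIntegral.intervalIntegrable_rpow' hγ).mul_continuousOn (by fun_prop)

lemma aux_hasDerivAt (γ : ℝ) (hγ : -1 < γ) (b y : ℝ) (hy : 0 < y) :
    HasDerivAt (fun y => ∫ t in (0:ℝ)..y, t ^ γ * Real.exp (-b * t))
      (y ^ γ * Real.exp (-b * y)) y := by
  have hc : ∀ z : ℝ, 0 < z → ContinuousAt (fun t : ℝ => t ^ γ * Real.exp (-b * t)) z := by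
    intro z hz
    exact (Real.continuousAt_rpow_const z γ (Or.inl hz.ne')).mul (by fun_prop)
  refine intervalIntegral.integral_hasDerivAt_right (aux_intervalIntegrable γ hγ b 0 y) ?_ (hc y hy)
  exact ContinuousAt.stronglyMeasurableAtFilter isOpen_Ioi (fun z hz => hc z hz) y hy

lemma aux_nonneg (γ b y : ℝ) (hy : 0 ≤ y) :
    0 ≤ ∫ t in (0:ℝ)..y, t ^ γ * Real.exp (-b * t) := by
  apply intervalIntegral.integral_nonneg hy
  intro t ht
  have := Real.rpow_nonneg ht.1 γ
  positivity

lemma aux_bound1 (γ : ℝ) (hγ : -1 < γ) (b y : ℝ) (hb : 0 ≤ b) (hy : 0 ≤ y) :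
    ∫ t in (0:ℝ)..y, t ^ γ * Real.exp (-b * t) ≤ 1 / (1 + γ) * y ^ (1 + γ) := by
  have h1 : ∫ t in (0:ℝ)..y, t ^ γ * Real.exp (-b * t) ≤ ∫ t in (0:ℝ)..y, t ^ γ := by
    apply intervalIntegral.integral_mono_on hy (aux_intervalIntegrable γ hγ b 0 y)
      (intervalIntegral.intervalIntegrable_rpow' hγ)
    intro t ht
    have h2 := Real.rpow_nonneg ht.1 γ
    have h3 : Real.exp (-b * t) ≤ 1 := by
      rw [Real.exp_le_one_iff]
      nlinarith [mul_nonneg hb ht.1]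
    nlinarith
  refine h1.trans (le_of_eq ?_)
  rw [integral_rpow (Or.inl hγ), Real.zero_rpow (by linarith), add_comm γ 1]
  ring

lemma aux_bound2 (γ : ℝ) (hγ : -1 < γ) (b y : ℝ) (hb : 0 < b) (hy : 0 ≤ y) :
    ∫ t in (0:ℝ)..y, t ^ γ * Real.exp (-b * t) ≤ Real.Gamma (1 + γ) * b⁻¹ ^ (1 + γ) := by
  have h := Real.integral_rpow_mul_exp_neg_mul_Ioi (a := 1 + γ) (r := b) (by linarith) hb
  have e : ∀ t : ℝ, t ^ (1 + γ - 1) * Real.exp (-(b * t)) = t ^ γ * Real.exp (-b * t) := by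
    intro t; rw [add_sub_cancel_left, neg_mul]
  simp_rw [e, one_div] at h
  have hpos : 0 < Real.Gamma (1 + γ) * b⁻¹ ^ (1 + γ) :=
    mul_pos (Real.Gamma_pos_of_pos (by linarith)) (Real.rpow_pos_of_pos (inv_pos.2 hb) _)
  rw [intervalIntegral.integral_of_le hy, mul_comm (Real.Gamma _), ← h]
  apply setIntegral_mono_set
  · by_contra hn
    rw [integral_undef hn] at h
    linarith
  · filter_upwards [ae_restrict_mem measurableSet_Ioi] with t ht
    have h2 := Real.rpow_nonneg (le_of_lt ht) γ
    simp only [Pi.zero_apply]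
    positivity
  · exact (Set.Ioc_subset_Ioi_self).eventuallyLE

lemma aux_diff (γ : ℝ) (hγ : -1 < γ) (g : ℝ → ℝ) (a b : ℝ)
    (hd : ∀ y : ℝ, 0 < y → DifferentiableAt ℝ g y)
    (hg : ∀ y : ℝ, 0 < y → |deriv g y| ≤ a * y ^ γ * Real.exp (-b * y))
    (x y : ℝ) (hx : 0 < x) (hxy : x ≤ y) :
    |g y - g x| ≤ a * (∫ t in (0:ℝ)..y, t ^ γ * Real.exp (-b * t))
      - a * ∫ t in (0:ℝ)..x, t ^ γ * Real.exp (-b * t) := by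
  set K : ℝ → ℝ := fun y => ∫ t in (0:ℝ)..y, t ^ γ * Real.exp (-b * t) with hK
  have hder : ∀ s z : ℝ, 0 < z → HasDerivAt (fun y => a * K y + s * g y)
      (a * (z ^ γ * Real.exp (-b * z)) + s * deriv g z) z := fun s z hz =>
    ((aux_hasDerivAt γ hγ b z hz).const_mul a).add ((hd z hz).hasDerivAt.const_mul s)
  have hmono : ∀ s : ℝ, |s| = 1 → a * K x + s * g x ≤ a * K y + s * g y := by
    intro s hs
    have : MonotoneOn (fun y => a * K y + s * g y) (Set.Ioi 0) := by
      apply monotoneOn_of_deriv_nonneg (convex_Ioi 0)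
      · exact fun z hz => (hder s z hz).continuousAt.continuousWithinAt
      · rw [interior_Ioi]
        exact fun z hz => (hder s z hz).differentiableAt.differentiableWithinAt
      · rw [interior_Ioi]
        intro z hz
        rw [(hder s z hz).deriv]
        have h1 := hg z hz
        have h2 := neg_abs_le (s * deriv g z)
        rw [abs_mul, hs, one_mul] at h2
        linarith
    exact this hx (lt_of_lt_of_le hx hxy) hxy
  have h1 := hmono 1 (by simp)
  have h2 := hmono (-1) (by simp)
  change |g y - g x| ≤ a * K y - a * K x
  rw [abs_le]
  constructor <;> linarith

open MeasureTheory Filter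

/-- Lemma 3.2, approximating sums by integrals.
Let `g : (0,∞) → ℝ` be differentiable with `|g'(y)| ≤ a y^γ e^{-by}` for all `y > 0`, where
`γ > -1` and `a, b ≥ 0`. Then for every `α > 0` there is a constant `c = c(α,γ)`, not depending
on `g`, `a`, `b` or `u`, such that for all `u > 0`,
`|Σ_{i=2}^∞ [g(u i^{-α}) - ∫_i^{i+1} g(u x^{-α}) dx]| ≤ c · a · min(u, b⁻¹)^{1+γ}`,
where `min(u, b⁻¹)` is interpreted as `u` when `b = 0`.  (The series is indexed by
`i ↦ i + 2`, `i : ℕ`, so that it runs over `i ≥ 2`; convergence is part of the claim.) -/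
theorem sum_integral_approx
    (α : ℝ) (hαpos : 0 < α) (γ : ℝ) (hγ : -1 < γ) :
    ∃ c : ℝ, 0 < c ∧
      ∀ (g : ℝ → ℝ) (a b : ℝ), 0 ≤ a → 0 ≤ b →
        (∀ y : ℝ, 0 < y → DifferentiableAt ℝ g y) →
        (∀ y : ℝ, 0 < y → |deriv g y| ≤ a * y ^ γ * Real.exp (-b * y)) →
        ∀ u : ℝ, 0 < u →
          Summable (fun i : ℕ =>
            g (u * ((i : ℝ) + 2) ^ (-α))
              - ∫ x in ((i : ℝ) + 2)..((i : ℝ) + 3), g (u * x ^ (-α))) ∧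
          |∑' i : ℕ, (g (u * ((i : ℝ) + 2) ^ (-α))
              - ∫ x in ((i : ℝ) + 2)..((i : ℝ) + 3), g (u * x ^ (-α)))|
            ≤ c * a * (if b = 0 then u else min u b⁻¹) ^ (1 + γ) := by
  have hγ' : 0 < 1 + γ := by linarith
  have hG := Real.Gamma_pos_of_pos hγ'
  refine ⟨1 / (1 + γ) + Real.Gamma (1 + γ), by positivity, ?_⟩
  intro g a b ha hb hd hg u hu
  set K : ℝ → ℝ := fun y => ∫ t in (0:ℝ)..y, t ^ γ * Real.exp (-b * t) with hK
  set M : ℝ := if b = 0 then u else min u b⁻¹ with hM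
  set w : ℝ → ℝ := fun x => u * x ^ (-α) with hw
  have hwpos : ∀ x : ℝ, 0 < x → 0 < w x := fun x hx => mul_pos hu (Real.rpow_pos_of_pos hx _)
  have hwanti : ∀ x y : ℝ, 0 < x → x ≤ y → w y ≤ w x := fun x y hx hxy =>
    mul_le_mul_of_nonneg_left (Real.rpow_le_rpow_of_nonpos hx hxy (by linarith)) hu.le
  have hdiff : ∀ x y : ℝ, 0 < x → x ≤ y → |g y - g x| ≤ a * K y - a * K x :=
    fun x y hx hxy => aux_diff γ hγ g a b hd hg x y hx hxy
  have hKmono : ∀ x y : ℝ, 0 < x → x ≤ y → a * K x ≤ a * K y := fun x y hx hxy => by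
    have := (abs_nonneg _).trans (hdiff x y hx hxy)
    linarith
  have hKu : K u ≤ (1 / (1 + γ) + Real.Gamma (1 + γ)) * M ^ (1 + γ) := by
    have hMpos : 0 < M := by
      rw [hM]
      split_ifs with h
      · exact hu
      · exact lt_min hu (inv_pos.2 (lt_of_le_of_ne hb (Ne.symm h)))
    have hMp : 0 < M ^ (1 + γ) := Real.rpow_pos_of_pos hMpos _
    have h1 : 0 < 1 / (1 + γ) * M ^ (1 + γ) := by positivity
    have h2 : 0 < Real.Gamma (1 + γ) * M ^ (1 + γ) := by positivity
    rw [add_mul]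
    have hcase : M = u ∨ (0 < b ∧ M = b⁻¹) := by
      rw [hM]
      split_ifs with h
      · exact Or.inl rfl
      · rcases min_choice u b⁻¹ with h' | h'
        · exact Or.inl h'
        · exact Or.inr ⟨lt_of_le_of_ne hb (Ne.symm h), h'⟩
    rcases hcase with h | ⟨hb', h⟩
    · have := aux_bound1 γ hγ b u hb hu.le
      rw [← h] at this
      rw [← h]
      change K M ≤ _ at this
      linarith
    · have := aux_bound2 γ hγ b u hb' hu.le
      rw [← h] at this
      change K u ≤ _ at this
      linarith
  have hterm : ∀ i : ℕ, |g (w ((i : ℝ) + 2)) - ∫ x in ((i : ℝ) + 2)..((i : ℝ) + 3), g (w x)|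
      ≤ a * K (w ((i : ℝ) + 2)) - a * K (w (((i + 1 : ℕ) : ℝ) + 2)) := by
    intro i
    have hi : (0 : ℝ) ≤ i := Nat.cast_nonneg i
    have hle : (i : ℝ) + 2 ≤ (i : ℝ) + 3 := by linarith
    have e3 : (((i + 1 : ℕ) : ℝ) + 2) = (i : ℝ) + 3 := by push_cast; ring
    rw [e3]
    have hcont : ContinuousOn (fun x => g (w x)) (Set.uIcc ((i : ℝ) + 2) ((i : ℝ) + 3)) := by
      rw [Set.uIcc_of_le hle]
      intro x hx
      have hx0 : 0 < x := by linarith [hx.1]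
      have hc : ContinuousAt w x :=
        continuousAt_const.mul (Real.continuousAt_rpow_const x (-α) (Or.inl hx0.ne'))
      exact (ContinuousAt.comp (f := w) (g := g) (hd _ (hwpos x hx0)).continuousAt
        hc).continuousWithinAt
    have heq : g (w ((i : ℝ) + 2)) - ∫ x in ((i : ℝ) + 2)..((i : ℝ) + 3), g (w x)
        = ∫ x in ((i : ℝ) + 2)..((i : ℝ) + 3), (g (w ((i : ℝ) + 2)) - g (w x)) := by
      rw [intervalIntegral.integral_sub intervalIntegrable_const hcont.intervalIntegrable,
        intervalIntegral.integral_const]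
      have : (i : ℝ) + 3 - (i + 2) = 1 := by ring
      rw [this, one_smul]
    rw [heq]
    have := intervalIntegral.norm_integral_le_of_norm_le_const
      (a := (i : ℝ) + 2) (b := (i : ℝ) + 3) (f := fun x => g (w ((i : ℝ) + 2)) - g (w x))
      (C := a * K (w ((i : ℝ) + 2)) - a * K (w ((i : ℝ) + 3))) (by
        intro x hx
        rw [Set.uIoc_of_le hle] at hx
        have hx0 : 0 < x := by linarith [hx.1]
        have h1 := hdiff (w x) (w ((i : ℝ) + 2)) (hwpos x hx0)
          (hwanti _ _ (by linarith) hx.1.le)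
        have h2 := hKmono (w ((i : ℝ) + 3)) (w x) (hwpos _ (by linarith))
          (hwanti _ _ hx0 hx.2)
        rw [Real.norm_eq_abs]
        linarith)
    have e1 : |(i : ℝ) + 3 - (i + 2)| = 1 := by
      rw [show (i : ℝ) + 3 - (i + 2) = 1 by ring, abs_one]
    rw [e1, mul_one, Real.norm_eq_abs] at this
    exact this
  have hsum : ∀ n : ℕ, ∑ i ∈ Finset.range n,
      |g (w ((i : ℝ) + 2)) - ∫ x in ((i : ℝ) + 2)..((i : ℝ) + 3), g (w x)|
      ≤ (1 / (1 + γ) + Real.Gamma (1 + γ)) * a * M ^ (1 + γ) := by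
    intro n
    refine (Finset.sum_le_sum fun i _ => hterm i).trans ?_
    rw [Finset.sum_range_sub' (fun i : ℕ => a * K (w ((i : ℝ) + 2)))]
    have h1 : 0 ≤ a * K (w ((n : ℝ) + 2)) :=
      mul_nonneg ha (aux_nonneg γ b _ (hwpos _ (by positivity)).le)
    have h2 : a * K (w (((0 : ℕ) : ℝ) + 2)) ≤ a * K u := by
      apply hKmono _ _ (hwpos _ (by positivity))
      have := hwanti 1 (((0 : ℕ) : ℝ) + 2) one_pos (by norm_num)
      simpa [hw] using this
    have h3 := mul_le_mul_of_nonneg_left hKu ha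
    have h4 : a * ((1 / (1 + γ) + Real.Gamma (1 + γ)) * M ^ (1 + γ))
        = (1 / (1 + γ) + Real.Gamma (1 + γ)) * a * M ^ (1 + γ) := by
      rw [← mul_assoc, mul_comm a]
    rw [h4] at h3
    exact (sub_le_self _ h1).trans (h2.trans h3)
  have hS := summable_of_sum_range_le (fun i => abs_nonneg _) hsum
  refine ⟨hS.of_abs, ?_⟩
  have h1 := norm_tsum_le_tsum_norm (f := fun i : ℕ =>
    g (w ((i : ℝ) + 2)) - ∫ x in ((i : ℝ) + 2)..((i : ℝ) + 3), g (w x)) hS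
  exact h1.trans (Real.tsum_le_of_sum_range_le (fun i => abs_nonneg _) hsum)
end

section
/- Let c_i=i^{−α} with α=1/(τ−1), τ∈(3,4). For every real a>τ−1 and every b>0 there exists a constant c(a,b)>0 such that, as u→∞, Σ_{i=2}^∞ c_i^{a} e^{−b c_i u} = c(a,b) · u^{τ−a−1} · (1+o(1)). -/
open MeasureTheory Filter

/-- The rescaled summand. -/
noncomputable def gfun (p α b : ℝ) (y : ℝ) : ℝ := y ^ (-p) * Real.exp (-b * y ^ (-α))

lemma gfun_meas (p α b : ℝ) : Measurable (gfun p α b) := by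
  unfold gfun; fun_prop

lemma gfun_pos (p α b : ℝ) {y : ℝ} (hy : 0 < y) : 0 < gfun p α b y := by
  unfold gfun; positivity

lemma gfun_cont (p α b : ℝ) {y : ℝ} (hy : 0 < y) : ContinuousAt (gfun p α b) y := by
  unfold gfun
  have h1 : ContinuousAt (fun y : ℝ => y ^ (-p)) y :=
    Real.continuousAt_rpow_const _ _ (Or.inl hy.ne')
  have h2 : ContinuousAt (fun y : ℝ => y ^ (-α)) y :=
    Real.continuousAt_rpow_const _ _ (Or.inl hy.ne')
  exact h1.mul (Real.continuous_exp.continuousAt.comp (continuousAt_const.mul h2))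

lemma pow_exp_bound {a b z : ℝ} (ha : 0 < a) (hb : 0 < b) (hz : 0 < z) :
    z ^ a * Real.exp (-b * z) ≤ (a / b) ^ a := by
  have h1 : b * z / a ≤ Real.exp (b * z / a) := by
    linarith [Real.add_one_le_exp (b * z / a)]
  have h2 : (b * z / a) ^ a ≤ Real.exp (b * z) := by
    calc (b * z / a) ^ a ≤ (Real.exp (b * z / a)) ^ a :=
          Real.rpow_le_rpow (by positivity) h1 ha.le
      _ = Real.exp (b * z) := by
          rw [← Real.exp_mul]; congr 1; field_simp
  have h3 : z ^ a = (a / b) ^ a * (b * z / a) ^ a := by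
    rw [← Real.mul_rpow (by positivity) (by positivity)]; congr 1; field_simp
  rw [h3, mul_assoc]
  have : (b * z / a) ^ a * Real.exp (-b * z) ≤ 1 := by
    calc _ ≤ Real.exp (b * z) * Real.exp (-b * z) := by gcongr
      _ = 1 := by rw [← Real.exp_add]; simp
  have h4 : 0 ≤ (a / b) ^ a := by positivity
  nlinarith

lemma gfun_bound {a α b : ℝ} (ha : 0 < a) (hα : 0 < α) (hb : 0 < b) :
    ∃ M : ℝ, 0 < M ∧ ∀ y w : ℝ, 0 < y → y ≤ w →
      gfun (α * a) α b w ≤ M * (y + 1) ^ (-(α * a)) := by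
  set p := α * a with hp
  have hp0 : 0 < p := by positivity
  set K := max ((a / b) ^ a) 1 with hK
  have hK0 : 0 < K := lt_of_lt_of_le one_pos (le_max_right _ _)
  refine ⟨2 ^ p * K, by positivity, fun y w hy hyw => ?_⟩
  have hw : 0 < w := hy.trans_le hyw
  have h1 : (w + 1) ^ (-p) ≤ (y + 1) ^ (-p) :=
    Real.rpow_le_rpow_of_nonpos (by positivity) (by linarith) (by linarith)
  have h2 : gfun p α b w ≤ 2 ^ p * K * (w + 1) ^ (-p) := by
    rcases le_total w 1 with hw1 | hw1
    · have hg : gfun p α b w ≤ K := by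
        refine le_trans ?_ (le_max_left _ _)
        have := pow_exp_bound ha hb (Real.rpow_pos_of_pos hw (-α))
        rwa [← Real.rpow_mul hw.le, show -α * a = -p by rw [hp]; ring] at this
      have h3 : (2 : ℝ) ^ (-p) ≤ (w + 1) ^ (-p) :=
        Real.rpow_le_rpow_of_nonpos (by positivity) (by linarith) (by linarith)
      have h4 : (2 : ℝ) ^ p * 2 ^ (-p) = 1 := by
        rw [← Real.rpow_add (by norm_num)]; simp
      calc _ ≤ K := hg
        _ = 2 ^ p * K * 2 ^ (-p) := by linear_combination (-K) * h4
        _ ≤ _ := by gcongr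
    · have hg : gfun p α b w ≤ w ^ (-p) := by
        unfold gfun
        have : Real.exp (-b * w ^ (-α)) ≤ 1 := by
          rw [Real.exp_le_one_iff]
          have : 0 < b * w ^ (-α) := by positivity
          linarith
        exact mul_le_of_le_one_right (by positivity) this
      have h3 : (2 * w) ^ (-p) ≤ (w + 1) ^ (-p) :=
        Real.rpow_le_rpow_of_nonpos (by positivity) (by linarith) (by linarith)
      rw [Real.mul_rpow (by norm_num) hw.le] at h3
      have h4 : (2 : ℝ) ^ p * 2 ^ (-p) = 1 := by
        rw [← Real.rpow_add (by norm_num)]; simp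
      calc _ ≤ w ^ (-p) := hg
        _ = 2 ^ p * 1 * (2 ^ (-p) * w ^ (-p)) := by linear_combination (-w ^ (-p)) * h4
        _ ≤ 2 ^ p * K * (w + 1) ^ (-p) := by
          gcongr
          exact le_max_right _ _
  exact h2.trans (by gcongr)

lemma integral_floor_eq_tsum (φ : ℕ → ℝ)
    (hi : IntegrableOn (fun t : ℝ => φ ⌊t⌋₊) (Set.Ioi 0)) :
    ∫ t in Set.Ioi (0 : ℝ), φ ⌊t⌋₊ = ∑' n, φ n := by
  have hU : (⋃ n : ℕ, Set.Ico (n : ℝ) (n + 1)) = Set.Ici 0 := by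
    ext t
    simp only [Set.mem_iUnion, Set.mem_Ico, Set.mem_Ici]
    constructor
    · rintro ⟨n, h, -⟩
      exact (Nat.cast_nonneg n).trans h
    · intro h
      exact ⟨⌊t⌋₊, Nat.floor_le h, Nat.lt_floor_add_one t⟩
  have hd : Pairwise (Function.onFun Disjoint (fun n : ℕ => Set.Ico (n : ℝ) (n + 1))) := by
    intro m n hmn
    refine Set.disjoint_left.2 fun t h1 h2 => hmn ?_
    rw [← (Nat.floor_eq_iff ((Nat.cast_nonneg m).trans h1.1)).2 h1,
      ← (Nat.floor_eq_iff ((Nat.cast_nonneg n).trans h2.1)).2 h2]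
  have hi' : IntegrableOn (fun t : ℝ => φ ⌊t⌋₊) (⋃ n : ℕ, Set.Ico (n : ℝ) (n + 1)) := by
    rw [hU]; exact (integrableOn_Ici_iff_integrableOn_Ioi (by simp)).2 hi
  have := integral_iUnion (fun n : ℕ => measurableSet_Ico) hd hi'
  rw [hU, integral_Ici_eq_integral_Ioi] at this
  rw [this]
  congr 1
  ext n
  rw [setIntegral_congr_fun (g := fun _ => φ n) measurableSet_Ico]
  · simp
  · intro t ht
    simp only
    rw [(Nat.floor_eq_iff ((Nat.cast_nonneg n).trans ht.1)).2 ht]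

/-- The step function whose integral is the Riemann sum. -/
noncomputable def stepf (p α b h y : ℝ) : ℝ := gfun p α b (h * ((⌊h⁻¹ * y⌋₊ : ℝ) + 2))

lemma step_ge {h y : ℝ} (hh : 0 < h) : y ≤ h * ((⌊h⁻¹ * y⌋₊ : ℝ) + 2) := by
  have := (Nat.lt_floor_add_one (h⁻¹ * y)).le
  calc y = h * (h⁻¹ * y) := by field_simp
    _ ≤ _ := by gcongr; linarith

lemma step_le {h y : ℝ} (hh : 0 < h) (hy : 0 < y) :
    h * ((⌊h⁻¹ * y⌋₊ : ℝ) + 2) ≤ y + 2 * h := by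
  have := Nat.floor_le (a := h⁻¹ * y) (by positivity)
  calc _ ≤ h * (h⁻¹ * y + 2) := by gcongr
    _ = _ := by field_simp

lemma stepf_meas (p α b h : ℝ) : Measurable (stepf p α b h) := by
  unfold stepf
  refine (gfun_meas p α b).comp ?_
  have : Measurable fun y : ℝ => (⌊h⁻¹ * y⌋₊ : ℝ) :=
    measurable_from_nat.comp (Nat.measurable_floor.comp (measurable_const_mul _))
  exact (this.add_const 2).const_mul h

theorem sum_c_pow_exp_asymptotics
    (τ α : ℝ) (hτ : τ ∈ Set.Ioo (3 : ℝ) 4) (hα : α = 1 / (τ - 1))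
    (a b : ℝ) (ha : τ - 1 < a) (hb : 0 < b) :
    ∃ C : ℝ, 0 < C ∧ ∃ err : ℝ → ℝ, Tendsto err atTop (nhds 0) ∧
      ∀ᶠ u : ℝ in atTop,
        (∑' i : ℕ, (((i : ℝ) + 2) ^ (-α)) ^ a * Real.exp (-b * ((i : ℝ) + 2) ^ (-α) * u))
          = C * u ^ (τ - a - 1) * (1 + err u) := by
  obtain ⟨hτ3, hτ4⟩ := hτ
  have hs : 0 < τ - 1 := by linarith
  have hα0 : 0 < α := by rw [hα]; positivity
  have ha0 : 0 < a := hs.trans ha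
  have hsα : (τ - 1) * α = 1 := by rw [hα]; field_simp
  have hp1 : 1 < α * a := by
    calc 1 = α * (τ - 1) := by linarith
      _ < α * a := by gcongr
  obtain ⟨M, hM, hbd⟩ := gfun_bound ha0 hα0 hb
  set p := α * a with hp
  have hGint : IntegrableOn (fun y : ℝ => M * (y + 1) ^ (-p)) (Set.Ioi 0) :=
    (integrableOn_add_rpow_Ioi_of_lt (by linarith) (by norm_num)).const_mul M
  have hgint : IntegrableOn (gfun p α b) (Set.Ioi 0) := by
    refine Integrable.mono' hGint (gfun_meas p α b).aestronglyMeasurable ?_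
    refine (ae_restrict_iff' measurableSet_Ioi).2 (ae_of_all _ fun y hy => ?_)
    rw [Real.norm_of_nonneg (gfun_pos p α b hy).le]
    exact hbd y y hy le_rfl
  have hsb : ∀ h : ℝ, 0 < h → ∀ y ∈ Set.Ioi (0 : ℝ),
      ‖stepf p α b h y‖ ≤ M * (y + 1) ^ (-p) := by
    intro h hh y hy
    have h1 := step_ge (y := y) hh
    unfold stepf
    rw [Real.norm_of_nonneg (gfun_pos p α b (lt_of_lt_of_le hy h1)).le]
    exact hbd _ _ hy h1
  have hsint : ∀ h : ℝ, 0 < h → IntegrableOn (stepf p α b h) (Set.Ioi 0) := by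
    intro h hh
    refine Integrable.mono' hGint (stepf_meas p α b h).aestronglyMeasurable ?_
    exact (ae_restrict_iff' measurableSet_Ioi).2 (ae_of_all _ (hsb h hh))
  set C := ∫ y in Set.Ioi (0 : ℝ), gfun p α b y with hC
  have hC0 : 0 < C := by
    rw [hC, setIntegral_pos_iff_support_of_nonneg_ae _ hgint]
    · have : Set.Ioi (0 : ℝ) ⊆ Function.support (gfun p α b) ∩ Set.Ioi 0 :=
        fun y hy => ⟨(gfun_pos p α b hy).ne', hy⟩
      refine lt_of_lt_of_le ?_ (measure_mono this)
      simp
    · exact (ae_restrict_iff' measurableSet_Ioi).2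
        (ae_of_all _ fun y hy => (gfun_pos p α b hy).le)
  -- Riemann sums converge
  have hlim : Tendsto (fun h : ℝ => ∫ y in Set.Ioi (0 : ℝ), stepf p α b h y)
      (nhdsWithin 0 (Set.Ioi 0)) (nhds C) := by
    refine tendsto_integral_filter_of_dominated_convergence
      (fun y : ℝ => M * (y + 1) ^ (-p)) ?_ ?_ hGint ?_
    · exact Eventually.of_forall fun h => (stepf_meas p α b h).aestronglyMeasurable
    · filter_upwards [self_mem_nhdsWithin] with h hh
      exact (ae_restrict_iff' measurableSet_Ioi).2 (ae_of_all _ (hsb h hh))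
    · refine (ae_restrict_iff' measurableSet_Ioi).2 (ae_of_all _ fun y hy => ?_)
      refine (gfun_cont p α b hy).tendsto.comp ?_
      refine tendsto_of_tendsto_of_tendsto_of_le_of_le' (g := fun _ => y)
        (h := fun h => y + 2 * h) tendsto_const_nhds ?_ ?_ ?_
      · have : Tendsto (fun h : ℝ => y + 2 * h) (nhds 0) (nhds (y + 2 * 0)) :=
          (Continuous.tendsto (by fun_prop) 0)
        rw [mul_zero, add_zero] at this
        exact this.mono_left nhdsWithin_le_nhds
      · filter_upwards [self_mem_nhdsWithin] with h hh using step_ge hh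
      · filter_upwards [self_mem_nhdsWithin] with h hh using step_le hh hy
  have hsum : ∀ h : ℝ, 0 < h → ∫ y in Set.Ioi (0 : ℝ), stepf p α b h y
      = h * ∑' i : ℕ, gfun p α b (h * ((i : ℝ) + 2)) := by
    intro h hh
    set φ : ℕ → ℝ := fun i => gfun p α b (h * ((i : ℝ) + 2)) with hφ
    have hh' : 0 < h⁻¹ := inv_pos.2 hh
    have e : ∀ y, stepf p α b h y = (fun t : ℝ => φ ⌊t⌋₊) (h⁻¹ * y) := fun y => rfl
    have hi : IntegrableOn (fun t : ℝ => φ ⌊t⌋₊) (Set.Ioi 0) := by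
      have := (integrableOn_Ioi_comp_mul_left_iff (fun t : ℝ => φ ⌊t⌋₊) 0 hh').1 (hsint h hh)
      simpa using this
    simp_rw [e]
    rw [integral_comp_mul_left_Ioi (fun t : ℝ => φ ⌊t⌋₊) 0 hh', mul_zero,
      integral_floor_eq_tsum φ hi]
    simp
  have hh0 : Tendsto (fun u : ℝ => u ^ (-(τ - 1))) atTop (nhdsWithin 0 (Set.Ioi 0)) := by
    refine tendsto_nhdsWithin_iff.2 ⟨tendsto_rpow_neg_atTop hs, ?_⟩
    filter_upwards [eventually_gt_atTop 0] with u hu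
    exact Real.rpow_pos_of_pos hu _
  have hL := hlim.comp hh0
  refine ⟨C, hC0, fun u => (∫ y in Set.Ioi (0 : ℝ), stepf p α b (u ^ (-(τ - 1))) y) / C - 1,
    ?_, ?_⟩
  · have := (hL.div_const C).sub_const 1
    rwa [div_self hC0.ne', sub_self] at this
  · filter_upwards [eventually_gt_atTop 0] with u hu
    have hup : 0 < u ^ (-(τ - 1)) := Real.rpow_pos_of_pos hu _
    rw [hsum _ hup]
    have hterm : ∀ i : ℕ, (((i : ℝ) + 2) ^ (-α)) ^ a * Real.exp (-b * ((i : ℝ) + 2) ^ (-α) * u)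
        = u ^ (-a) * gfun p α b (u ^ (-(τ - 1)) * ((i : ℝ) + 2)) := by
      intro i
      have hn : (0 : ℝ) < (i : ℝ) + 2 := by positivity
      unfold gfun
      rw [Real.mul_rpow hup.le hn.le, Real.mul_rpow hup.le hn.le, ← Real.rpow_mul hu.le,
        ← Real.rpow_mul hu.le, ← Real.rpow_mul hn.le]
      have e1 : -(τ - 1) * -α = 1 := by linarith
      have e2 : -(τ - 1) * -p = a := by rw [hp]; linear_combination a * hsα
      have e3 : -α * a = -p := by rw [hp]; ring
      rw [e1, e2, e3, Real.rpow_one]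
      have e4 : u ^ (-a) * u ^ a = 1 := by
        rw [← Real.rpow_add hu]; simp
      rw [show -b * (u * ((i : ℝ) + 2) ^ (-α)) = -b * ((i : ℝ) + 2) ^ (-α) * u by ring]
      linear_combination
        (-(((i : ℝ) + 2) ^ (-p)) * Real.exp (-b * ((i : ℝ) + 2) ^ (-α) * u)) * e4
    simp_rw [hterm]
    rw [tsum_mul_left]
    have e5 : u ^ (τ - a - 1) * u ^ (-(τ - 1)) = u ^ (-a) := by
      rw [← Real.rpow_add hu]; congr 1; ring
    rw [← e5]
    field_simp
    ring
end

section
/- The function Λ(θ) = ∫_0^∞ f(x;θ)dx is twice differentiable with Λ''(θ) > 0 for all θ∈ℝ, satisfies Λ(0)=0, Λ'(0) = ∫_0^∞ x^{−α}[1 − x^{−α} − e^{−x^{−α}}]dx < 0, and Λ'(θ)→∞ as θ→∞. Consequently there is a unique θ*>0 solving Λ'(θ*)=0; θ* is the unique minimizer of Λ over ℝ, and I := −Λ(θ*) > 0. -/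
open MeasureTheory Filter

noncomputable def lvD (u θ : ℝ) : ℝ := 1 + Real.exp (-u) * (Real.exp (-θ * u) - 1)
noncomputable def lvq (u θ : ℝ) : ℝ := (1 - Real.exp (-u)) / lvD u θ
noncomputable def lvg (u θ : ℝ) : ℝ := Real.log (lvD u θ) + θ * u - θ * u ^ 2
noncomputable def lvg1 (u θ : ℝ) : ℝ := u * lvq u θ - u ^ 2
noncomputable def lvg2 (u θ : ℝ) : ℝ := u ^ 2 * (lvq u θ * (1 - lvq u θ))
noncomputable def lvB (u : ℝ) : ℝ := min (u ^ 2) (u ^ 3)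

lemma lv_exp_lt {u : ℝ} (hu : 0 < u) : Real.exp (-u) < 1 := by
  rw [Real.exp_lt_one_iff]; linarith

lemma lvD_eq (u θ : ℝ) : lvD u θ = (1 - Real.exp (-u)) + Real.exp (-u) * Real.exp (-θ * u) := by
  unfold lvD; ring

lemma lvD_pos {u : ℝ} (hu : 0 < u) (θ : ℝ) : 0 < lvD u θ := by
  rw [lvD_eq]
  have := lv_exp_lt hu
  have := mul_pos (Real.exp_pos (-u)) (Real.exp_pos (-θ * u))
  linarith

lemma lvq_pos {u : ℝ} (hu : 0 < u) (θ : ℝ) : 0 < lvq u θ :=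
  div_pos (by linarith [lv_exp_lt hu]) (lvD_pos hu θ)

lemma lvq_one_sub {u : ℝ} (hu : 0 < u) (θ : ℝ) :
    1 - lvq u θ = Real.exp (-u) * Real.exp (-θ * u) / lvD u θ := by
  have h := lvD_pos hu θ
  unfold lvq
  rw [eq_div_iff h.ne', sub_mul, div_mul_cancel₀ _ h.ne', lvD_eq]; ring

lemma lvq_lt {u : ℝ} (hu : 0 < u) (θ : ℝ) : lvq u θ < 1 := by
  have : 0 < 1 - lvq u θ := by
    rw [lvq_one_sub hu]
    exact div_pos (mul_pos (Real.exp_pos _) (Real.exp_pos _)) (lvD_pos hu θ)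
  linarith

lemma lvD_hasDeriv (u θ : ℝ) :
    HasDerivAt (lvD u) (-(u * (Real.exp (-u) * Real.exp (-θ * u)))) θ := by
  have h1 : HasDerivAt (fun t : ℝ => -t * u) (-u) θ := by
    simpa using ((hasDerivAt_id θ).neg.mul_const u)
  have h := ((h1.exp.sub_const 1).const_mul (Real.exp (-u))).const_add 1
  refine h.congr_deriv ?_
  ring

lemma lvq_hasDeriv {u : ℝ} (hu : 0 < u) (θ : ℝ) :
    HasDerivAt (lvq u) (u * (lvq u θ * (1 - lvq u θ))) θ := by
  have h := lvD_pos hu θ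
  have h2 := (hasDerivAt_const θ (1 - Real.exp (-u))).div (lvD_hasDeriv u θ) h.ne'
  refine h2.congr_deriv ?_
  rw [lvq_one_sub hu]
  unfold lvq
  field_simp
  ring

lemma lvg_hasDeriv {u : ℝ} (hu : 0 < u) (θ : ℝ) : HasDerivAt (lvg u) (lvg1 u θ) θ := by
  have h := lvD_pos hu θ
  have h2 := (((lvD_hasDeriv u θ).log h.ne').add ((hasDerivAt_id θ).mul_const u)).sub
    ((hasDerivAt_id θ).mul_const (u ^ 2))
  refine h2.congr_deriv ?_
  have e : lvg1 u θ = u - u * (1 - lvq u θ) - u ^ 2 := by unfold lvg1; ring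
  rw [e, lvq_one_sub hu]
  field_simp
  ring

lemma lvg1_hasDeriv {u : ℝ} (hu : 0 < u) (θ : ℝ) : HasDerivAt (lvg1 u) (lvg2 u θ) θ := by
  have h2 := ((lvq_hasDeriv hu θ).const_mul u).sub_const (u ^ 2)
  refine h2.congr_deriv ?_
  unfold lvg2; ring

lemma lvg2_pos {u : ℝ} (hu : 0 < u) (θ : ℝ) : 0 < lvg2 u θ := by
  have := lvq_pos hu θ
  have := lvq_lt hu θ
  have : 0 < 1 - lvq u θ := by linarith
  unfold lvg2; positivity

lemma lvB_nonneg {u : ℝ} (hu : 0 < u) : 0 ≤ lvB u := by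
  unfold lvB; positivity

lemma lvq_le {u θ M : ℝ} (hu : 0 < u) (hM : |θ| ≤ M) : lvq u θ ≤ u * Real.exp (M * u) := by
  have hD : Real.exp (-(M * u)) ≤ lvD u θ := by
    have h1 := lv_exp_lt hu
    have h2 : Real.exp (-(M * u)) ≤ Real.exp (-θ * u) := by
      apply Real.exp_le_exp.2
      have := (abs_le.1 hM).2
      nlinarith
    have h3 : Real.exp (-(M * u)) ≤ 1 := by
      rw [Real.exp_le_one_iff]
      have := (abs_nonneg θ).trans hM
      have := mul_nonneg this hu.le
      linarith
    rw [lvD_eq]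
    nlinarith [mul_le_mul_of_nonneg_left h2 (Real.exp_pos (-u)).le,
      mul_le_mul_of_nonneg_left h3 (sub_nonneg.2 h1.le)]
  have h4 : 1 - Real.exp (-u) ≤ u := by linarith [Real.add_one_le_exp (-u)]
  unfold lvq
  rw [div_le_iff₀ (lvD_pos hu θ)]
  have h5 : Real.exp (M * u) * Real.exp (-(M * u)) = 1 := by rw [← Real.exp_add]; simp
  calc 1 - Real.exp (-u) ≤ u * (Real.exp (M * u) * Real.exp (-(M * u))) := by rw [h5]; linarith
    _ ≤ u * (Real.exp (M * u) * lvD u θ) := by gcongr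
    _ = _ := by ring

lemma lvg2_le {u θ M : ℝ} (hu : 0 < u) (hM : |θ| ≤ M) :
    lvg2 u θ ≤ Real.exp M * lvB u := by
  have hM0 := (abs_nonneg θ).trans hM
  have q0 := lvq_pos hu θ
  have q1 := lvq_lt hu θ
  have hE : 1 ≤ Real.exp M := Real.one_le_exp hM0
  have hle : lvg2 u θ ≤ u ^ 2 * lvq u θ := by
    unfold lvg2
    have : lvq u θ * (1 - lvq u θ) ≤ lvq u θ := by nlinarith
    gcongr
  refine hle.trans ?_
  unfold lvB
  rcases le_total u 1 with h | h
  · rw [min_eq_right (pow_le_pow_of_le_one hu.le h (by norm_num))]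
    have h1 := lvq_le hu hM
    have h2 : Real.exp (M * u) ≤ Real.exp M := Real.exp_le_exp.2 (by nlinarith)
    calc u ^ 2 * lvq u θ ≤ u ^ 2 * (u * Real.exp M) := by
          gcongr; exact h1.trans (by gcongr)
      _ = _ := by ring
  · rw [min_eq_left (pow_le_pow_right₀ h (by norm_num))]
    nlinarith [pow_pos hu 2]

lemma lvq_zero (u : ℝ) : lvq u 0 = 1 - Real.exp (-u) := by
  unfold lvq lvD; simp

lemma lvg1_zero (u : ℝ) : lvg1 u 0 = u * (1 - u - Real.exp (-u)) := by
  unfold lvg1; rw [lvq_zero]; ring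

lemma lvg1_zero_neg {u : ℝ} (hu : 0 < u) : lvg1 u 0 < 0 := by
  rw [lvg1_zero]
  have := Real.add_one_lt_exp (neg_ne_zero.2 hu.ne')
  exact mul_neg_of_pos_of_neg hu (by linarith)

lemma lvg1_zero_abs {u : ℝ} (hu : 0 < u) : |lvg1 u 0| ≤ lvB u := by
  rw [abs_of_neg (lvg1_zero_neg hu), lvg1_zero]
  have h1 := lv_exp_lt hu
  refine le_min (by nlinarith) ?_
  -- exp(-u) ≤ 1 - u + u^2
  have h2 : Real.exp (-u) ≤ 1 - u + u ^ 2 := by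
    rcases le_total u 1 with h | h
    · have := Real.abs_exp_sub_one_sub_id_le (x := -u) (by rw [abs_neg, abs_of_pos hu]; exact h)
      have := (abs_le.1 this).2
      nlinarith
    · nlinarith
  nlinarith

lemma lvg1_abs {u θ M : ℝ} (hu : 0 < u) (hM : |θ| ≤ M) :
    |lvg1 u θ| ≤ (1 + Real.exp M * M) * lvB u := by
  have h := (convex_Icc (-M) M).norm_image_sub_le_of_norm_hasDerivWithin_le
    (f := lvg1 u) (f' := lvg2 u) (C := Real.exp M * lvB u) (x := 0) (y := θ)
    (fun x _ => (lvg1_hasDeriv hu x).hasDerivWithinAt)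
    (fun x hx => by
      rw [Real.norm_eq_abs, abs_of_pos (lvg2_pos hu x)]
      exact lvg2_le hu (abs_le.2 hx))
    (by have := (abs_nonneg θ).trans hM; constructor <;> linarith) (abs_le.1 hM)
  rw [Real.norm_eq_abs, Real.norm_eq_abs, sub_zero] at h
  have h0 := lvg1_zero_abs hu
  have hB := lvB_nonneg hu
  have h2 : Real.exp M * lvB u * |θ| ≤ Real.exp M * lvB u * M := by gcongr
  have h3 := abs_sub_abs_le_abs_sub (lvg1 u θ) (lvg1 u 0)
  linarith

lemma lvg_zero (u : ℝ) : lvg u 0 = 0 := by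
  unfold lvg lvD; simp

lemma lvg_abs {u θ M : ℝ} (hu : 0 < u) (hM : |θ| ≤ M) :
    |lvg u θ| ≤ (1 + Real.exp M * M) * M * lvB u := by
  have hM0 := (abs_nonneg θ).trans hM
  have h := (convex_Icc (-M) M).norm_image_sub_le_of_norm_hasDerivWithin_le
    (f := lvg u) (f' := lvg1 u) (C := (1 + Real.exp M * M) * lvB u) (x := 0) (y := θ)
    (fun x _ => (lvg_hasDeriv hu x).hasDerivWithinAt)
    (fun x hx => by
      rw [Real.norm_eq_abs]
      exact lvg1_abs hu (abs_le.2 hx))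
    (by constructor <;> linarith) (abs_le.1 hM)
  rw [Real.norm_eq_abs, Real.norm_eq_abs, sub_zero, lvg_zero, sub_zero] at h
  have hB := lvB_nonneg hu
  refine h.trans ?_
  calc _ ≤ (1 + Real.exp M * M) * lvB u * M := by gcongr
    _ = _ := by ring

lemma lvg1_lower {u θ : ℝ} (hu : 0 < u) (hu1 : u ≤ 1) (hθ : 2 * Real.exp 1 ≤ θ * u ^ 2) :
    u * (Real.exp (-1) / 2) ≤ lvg1 u θ - lvg1 u 0 := by
  have hθ0 : 0 < θ := by
    by_contra hc
    have := Real.exp_pos 1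
    nlinarith [pow_pos hu 2]
  have e : lvg1 u θ - lvg1 u 0 = u * (Real.exp (-u) - (1 - lvq u θ)) := by
    unfold lvg1; rw [lvq_zero]; ring
  rw [e]
  apply mul_le_mul_of_nonneg_left _ hu.le
  have h1 : Real.exp (-1) ≤ Real.exp (-u) := Real.exp_le_exp.2 (by linarith)
  have h2 : 1 - lvq u θ ≤ Real.exp (-1) / 2 := by
    rw [lvq_one_sub hu, div_le_iff₀ (lvD_pos hu θ), lvD_eq]
    have a1 : Real.exp (-θ * u) * (θ * u) ≤ 1 := by
      have : θ * u ≤ Real.exp (θ * u) := by linarith [Real.add_one_le_exp (θ * u)]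
      calc _ ≤ Real.exp (-θ * u) * Real.exp (θ * u) := by gcongr
        _ = 1 := by rw [← Real.exp_add]; simp
    have a2 : Real.exp (-u) * u ≤ 1 - Real.exp (-u) := by
      have h := Real.add_one_le_exp u
      have : Real.exp (-u) * (u + 1) ≤ Real.exp (-u) * Real.exp u := by gcongr
      rw [← Real.exp_add] at this
      simp at this
      linarith
    have a3 : Real.exp (-1) * Real.exp 1 = 1 := by rw [← Real.exp_add]; simp
    set E := Real.exp (-θ * u) with hE
    have E0 : 0 < E := Real.exp_pos _
    set v := Real.exp (-u)
    have v0 : 0 < v := Real.exp_pos _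
    have e1 : 0 < Real.exp (-1) := Real.exp_pos _
    -- E * 2e ≤ E θ u^2 ≤ u
    have a4 : E * (2 * Real.exp 1) ≤ u := by
      calc _ ≤ E * (θ * u ^ 2) := by gcongr
        _ = (E * (θ * u)) * u := by ring
        _ ≤ 1 * u := by gcongr
        _ = u := one_mul u
    have a5 : E ≤ Real.exp (-1) / 2 * u := by
      have := mul_le_mul_of_nonneg_left a4 e1.le
      have e2 : Real.exp (-1) * (E * (2 * Real.exp 1)) = 2 * E := by linear_combination 2 * E * a3
      linarith
    calc v * E ≤ v * (Real.exp (-1) / 2 * u) := by gcongr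
      _ = Real.exp (-1) / 2 * (v * u) := by ring
      _ ≤ Real.exp (-1) / 2 * (1 - v + v * E) := by
        gcongr; linarith [mul_pos v0 E0]
  linarith

lemma lvB_integrable {α : ℝ} (h1 : 1 / 3 < α) (h2 : α < 1 / 2) :
    IntegrableOn (fun x : ℝ => lvB (x ^ (-α))) (Set.Ioi 0) := by
  have hm : Measurable (fun x : ℝ => lvB (x ^ (-α))) := by unfold lvB; fun_prop
  rw [← Set.Ioc_union_Ioi_eq_Ioi (zero_le_one' ℝ)]
  refine IntegrableOn.union ?_ ?_
  · have hi : IntegrableOn (fun x : ℝ => x ^ (-(2 * α))) (Set.Ioc 0 1) := by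
      rw [← intervalIntegrable_iff_integrableOn_Ioc_of_le zero_le_one]
      exact intervalIntegral.intervalIntegrable_rpow' (by linarith)
    refine Integrable.mono' hi hm.aestronglyMeasurable ?_
    refine (ae_restrict_iff' measurableSet_Ioc).2 (Eventually.of_forall fun x hx => ?_)
    have hx0 : 0 < x := hx.1
    have hu := Real.rpow_pos_of_pos hx0 (-α)
    rw [Real.norm_eq_abs, abs_of_nonneg (lvB_nonneg hu)]
    refine (min_le_left _ _).trans (le_of_eq ?_)
    rw [← Real.rpow_natCast, ← Real.rpow_mul hx0.le]
    congr 1; push_cast; ring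
  · have hi : IntegrableOn (fun x : ℝ => x ^ (-(3 * α))) (Set.Ioi 1) :=
      integrableOn_Ioi_rpow_of_lt (by linarith) zero_lt_one
    refine Integrable.mono' hi hm.aestronglyMeasurable ?_
    refine (ae_restrict_iff' measurableSet_Ioi).2 (Eventually.of_forall fun x hx => ?_)
    have hx0 : 0 < x := lt_trans zero_lt_one hx
    have hu := Real.rpow_pos_of_pos hx0 (-α)
    rw [Real.norm_eq_abs, abs_of_nonneg (lvB_nonneg hu)]
    refine (min_le_right _ _).trans (le_of_eq ?_)
    rw [← Real.rpow_natCast, ← Real.rpow_mul hx0.le]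
    congr 1; push_cast; ring

lemma lvg_meas (α θ : ℝ) : Measurable (fun x : ℝ => lvg (x ^ (-α)) θ) := by
  unfold lvg lvD; fun_prop

lemma lvg1_meas (α θ : ℝ) : Measurable (fun x : ℝ => lvg1 (x ^ (-α)) θ) := by
  unfold lvg1 lvq lvD; fun_prop

lemma lvg2_meas (α θ : ℝ) : Measurable (fun x : ℝ => lvg2 (x ^ (-α)) θ) := by
  unfold lvg2 lvq lvD; fun_prop

lemma lv_ae {α : ℝ} {P : ℝ → Prop} (h : ∀ u, 0 < u → P u) :
    ∀ᵐ x ∂(volume.restrict (Set.Ioi (0 : ℝ))), P (x ^ (-α)) :=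
  (ae_restrict_iff' measurableSet_Ioi).2
    (Eventually.of_forall fun _ hx => h _ (Real.rpow_pos_of_pos hx _))

lemma lvg_int {α : ℝ} (h1 : 1 / 3 < α) (h2 : α < 1 / 2) (θ : ℝ) :
    IntegrableOn (fun x : ℝ => lvg (x ^ (-α)) θ) (Set.Ioi 0) :=
  Integrable.mono' ((lvB_integrable h1 h2).const_mul ((1 + Real.exp |θ| * |θ|) * |θ|))
    (lvg_meas α θ).aestronglyMeasurable
    (lv_ae (P := fun u => ‖lvg u θ‖ ≤ (1 + Real.exp |θ| * |θ|) * |θ| * lvB u)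
      fun _ hu => lvg_abs hu le_rfl)

lemma lvg1_int {α : ℝ} (h1 : 1 / 3 < α) (h2 : α < 1 / 2) (θ : ℝ) :
    IntegrableOn (fun x : ℝ => lvg1 (x ^ (-α)) θ) (Set.Ioi 0) :=
  Integrable.mono' ((lvB_integrable h1 h2).const_mul (1 + Real.exp |θ| * |θ|))
    (lvg1_meas α θ).aestronglyMeasurable
    (lv_ae (P := fun u => ‖lvg1 u θ‖ ≤ (1 + Real.exp |θ| * |θ|) * lvB u)
      fun _ hu => lvg1_abs hu le_rfl)

lemma lv_ball {θ t : ℝ} (h : t ∈ Metric.ball (0 : ℝ) (|θ| + 1)) : |t| ≤ |θ| + 1 := by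
  rw [mem_ball_zero_iff, Real.norm_eq_abs] at h; exact h.le

lemma lv_nhds (θ : ℝ) : Metric.ball (0 : ℝ) (|θ| + 1) ∈ nhds θ :=
  Metric.isOpen_ball.mem_nhds (by rw [mem_ball_zero_iff, Real.norm_eq_abs]; linarith)

lemma lvΛ_hasDeriv {α : ℝ} (h1 : 1 / 3 < α) (h2 : α < 1 / 2) (θ : ℝ) :
    HasDerivAt (fun θ => ∫ x in Set.Ioi (0 : ℝ), lvg (x ^ (-α)) θ)
      (∫ x in Set.Ioi (0 : ℝ), lvg1 (x ^ (-α)) θ) θ :=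
  (hasDerivAt_integral_of_dominated_loc_of_deriv_le (lv_nhds θ)
    (F := fun θ x => lvg (x ^ (-α)) θ) (F' := fun θ x => lvg1 (x ^ (-α)) θ)
    (Eventually.of_forall fun t => (lvg_meas α t).aestronglyMeasurable)
    (lvg_int h1 h2 θ) (lvg1_meas α θ).aestronglyMeasurable
    (lv_ae (P := fun u => ∀ t ∈ Metric.ball (0 : ℝ) (|θ| + 1),
      ‖lvg1 u t‖ ≤ (1 + Real.exp (|θ| + 1) * (|θ| + 1)) * lvB u)
      fun _ hu t ht => lvg1_abs hu (lv_ball ht))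
    ((lvB_integrable h1 h2).const_mul _)
    (lv_ae (P := fun u => ∀ t ∈ Metric.ball (0 : ℝ) (|θ| + 1),
      HasDerivAt (lvg u) (lvg1 u t) t) fun _ hu t _ => lvg_hasDeriv hu t)).2

lemma lvΛ1_hasDeriv {α : ℝ} (h1 : 1 / 3 < α) (h2 : α < 1 / 2) (θ : ℝ) :
    IntegrableOn (fun x : ℝ => lvg2 (x ^ (-α)) θ) (Set.Ioi 0) ∧
    HasDerivAt (fun θ => ∫ x in Set.Ioi (0 : ℝ), lvg1 (x ^ (-α)) θ)
      (∫ x in Set.Ioi (0 : ℝ), lvg2 (x ^ (-α)) θ) θ :=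
  hasDerivAt_integral_of_dominated_loc_of_deriv_le (lv_nhds θ)
    (F := fun θ x => lvg1 (x ^ (-α)) θ) (F' := fun θ x => lvg2 (x ^ (-α)) θ)
    (Eventually.of_forall fun t => (lvg1_meas α t).aestronglyMeasurable)
    (lvg1_int h1 h2 θ) (lvg2_meas α θ).aestronglyMeasurable
    (lv_ae (P := fun u => ∀ t ∈ Metric.ball (0 : ℝ) (|θ| + 1),
      ‖lvg2 u t‖ ≤ Real.exp (|θ| + 1) * lvB u)
      fun u hu t ht => by
        rw [Real.norm_eq_abs, abs_of_pos (lvg2_pos hu t)]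
        exact lvg2_le hu (lv_ball ht))
    ((lvB_integrable h1 h2).const_mul _)
    (lv_ae (P := fun u => ∀ t ∈ Metric.ball (0 : ℝ) (|θ| + 1),
      HasDerivAt (lvg1 u) (lvg2 u t) t) fun _ hu t _ => lvg1_hasDeriv hu t)

lemma lv_int_pos {F : ℝ → ℝ} (hF : IntegrableOn F (Set.Ioi 0)) (hp : ∀ x, 0 < x → 0 < F x) :
    0 < ∫ x in Set.Ioi (0 : ℝ), F x := by
  rw [setIntegral_pos_iff_support_of_nonneg_ae _ hF]
  · have : Function.support F ∩ Set.Ioi 0 = Set.Ioi 0 :=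
      Set.inter_eq_right.2 fun x hx => (hp x hx).ne'
    rw [this]; simp
  · exact (ae_restrict_iff' measurableSet_Ioi).2 (Eventually.of_forall fun x hx => (hp x hx).le)

lemma lvΛ1_tendsto {α : ℝ} (h1 : 1 / 3 < α) (h2 : α < 1 / 2) :
    Tendsto (fun θ => ∫ x in Set.Ioi (0 : ℝ), lvg1 (x ^ (-α)) θ) atTop atTop := by
  rw [tendsto_atTop]
  intro K
  set L0 := ∫ x in Set.Ioi (0 : ℝ), lvg1 (x ^ (-α)) 0 with hL0
  set c := Real.exp (-1) / 2 with hc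
  have c0 : 0 < c := by positivity
  obtain ⟨X, hX2, hX⟩ : ∃ X : ℝ, 2 ≤ X ∧ (K - L0) * 2 / c ≤ X ^ (1 - α) :=
    ((eventually_ge_atTop 2).and
      ((tendsto_rpow_atTop (show 0 < 1 - α by linarith)).eventually_ge_atTop _)).exists
  have X0 : 0 < X := by linarith
  have w0 : 0 < X ^ (-α) := Real.rpow_pos_of_pos X0 _
  filter_upwards [eventually_ge_atTop (2 * Real.exp 1 / (X ^ (-α)) ^ 2),
    eventually_ge_atTop 0] with θ hθ hθ0
  rw [div_le_iff₀ (by positivity)] at hθ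
  have hint : IntegrableOn (fun x : ℝ => lvg1 (x ^ (-α)) θ - lvg1 (x ^ (-α)) 0) (Set.Ioi 0) :=
    (lvg1_int h1 h2 θ).sub (lvg1_int h1 h2 0)
  have hsub : (∫ x in Set.Ioi (0 : ℝ), (lvg1 (x ^ (-α)) θ - lvg1 (x ^ (-α)) 0))
      = (∫ x in Set.Ioi (0 : ℝ), lvg1 (x ^ (-α)) θ) - L0 :=
    integral_sub (lvg1_int h1 h2 θ) (lvg1_int h1 h2 0)
  have hss : Set.Ioc 1 X ⊆ Set.Ioi (0 : ℝ) := fun x hx => lt_trans zero_lt_one hx.1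
  have hA : (∫ x in Set.Ioc 1 X, (lvg1 (x ^ (-α)) θ - lvg1 (x ^ (-α)) 0))
      ≤ ∫ x in Set.Ioi (0 : ℝ), (lvg1 (x ^ (-α)) θ - lvg1 (x ^ (-α)) 0) := by
    refine setIntegral_mono_set hint ?_ hss.eventuallyLE
    refine lv_ae (P := fun u => 0 ≤ lvg1 u θ - lvg1 u 0) fun u hu => ?_
    have hm : Monotone (lvg1 u) :=
      monotone_of_deriv_nonneg (fun t => (lvg1_hasDeriv hu t).differentiableAt)
        fun t => by rw [(lvg1_hasDeriv hu t).deriv]; exact (lvg2_pos hu t).le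
    exact sub_nonneg.2 (hm hθ0)
  have hB : (∫ _x in Set.Ioc 1 X, X ^ (-α) * c)
      ≤ ∫ x in Set.Ioc 1 X, (lvg1 (x ^ (-α)) θ - lvg1 (x ^ (-α)) 0) := by
    refine setIntegral_mono_on (integrableOn_const (by simp)) (hint.mono_set hss)
      measurableSet_Ioc fun x hx => ?_
    have hx0 : 0 < x := hss hx
    have hu : 0 < x ^ (-α) := Real.rpow_pos_of_pos hx0 _
    have hle : X ^ (-α) ≤ x ^ (-α) :=
      Real.rpow_le_rpow_of_nonpos hx0 hx.2 (by linarith)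
    have hu1 : x ^ (-α) ≤ 1 := Real.rpow_le_one_of_one_le_of_nonpos hx.1.le (by linarith)
    refine le_trans (by gcongr) (lvg1_lower hu hu1 (hθ.trans ?_))
    gcongr
  have hC : (∫ _x in Set.Ioc 1 X, X ^ (-α) * c) = (X - 1) * (X ^ (-α) * c) := by
    rw [setIntegral_const]
    simp [Measure.real, ENNReal.toReal_ofReal (show 0 ≤ X - 1 by linarith)]
  have hD : X ^ (1 - α) = X * X ^ (-α) := by
    rw [sub_eq_add_neg, Real.rpow_add X0, Real.rpow_one]
  rw [hD, div_le_iff₀ c0] at hX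
  have hE : X / 2 * (X ^ (-α) * c) ≤ (X - 1) * (X ^ (-α) * c) := by
    gcongr; linarith
  linarith


/-- Lemma 3.5, uniqueness of the limiting variational problem.
`Λ(θ) = ∫_0^∞ f(x;θ) dx` is twice differentiable with `Λ'' > 0`, `Λ(0) = 0`,
`Λ'(0) = ∫_0^∞ x^{-α}[1 - x^{-α} - e^{-x^{-α}}] dx < 0`, and `Λ'(θ) → ∞` as `θ → ∞`.
Consequently there is a unique `θ* > 0` with `Λ'(θ*) = 0`; it is the unique minimizer of `Λ`
and `I := -Λ(θ*) > 0`. -/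
theorem limiting_variational_problem
    (τ α : ℝ) (hτ : τ ∈ Set.Ioo (3 : ℝ) 4) (hα : α = 1 / (τ - 1))
    (f : ℝ → ℝ → ℝ)
    (hf : ∀ x θ : ℝ, f x θ
      = Real.log (1 + Real.exp (-x ^ (-α)) * (Real.exp (-θ * x ^ (-α)) - 1))
        + θ * x ^ (-α) - θ * x ^ (-(2 * α)))
    (Λ : ℝ → ℝ) (hΛ : ∀ θ, Λ θ = ∫ x in Set.Ioi (0 : ℝ), f x θ) :
    (∀ θ : ℝ, DifferentiableAt ℝ Λ θ) ∧
    (∀ θ : ℝ, DifferentiableAt ℝ (deriv Λ) θ) ∧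
    (∀ θ : ℝ, 0 < deriv (deriv Λ) θ) ∧
    Λ 0 = 0 ∧
    deriv Λ 0 = (∫ x in Set.Ioi (0 : ℝ),
      x ^ (-α) * (1 - x ^ (-α) - Real.exp (-x ^ (-α)))) ∧
    deriv Λ 0 < 0 ∧
    Tendsto (deriv Λ) atTop atTop ∧
    (∃! θs : ℝ, 0 < θs ∧ deriv Λ θs = 0) ∧
    (∀ θs : ℝ, 0 < θs → deriv Λ θs = 0 →
      (∀ θ' : ℝ, θ' ≠ θs → Λ θs < Λ θ') ∧ 0 < -Λ θs) := by
  obtain ⟨hτ1, hτ2⟩ := hτ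
  have h1 : 1 / 3 < α := by
    rw [hα]; exact one_div_lt_one_div_of_lt (by linarith) (by linarith)
  have h2 : α < 1 / 2 := by
    rw [hα]; exact one_div_lt_one_div_of_lt (by linarith) (by linarith)
  have eΛ : Λ = fun θ => ∫ x in Set.Ioi (0 : ℝ), lvg (x ^ (-α)) θ := by
    funext θ
    rw [hΛ]
    refine setIntegral_congr_fun measurableSet_Ioi fun x hx => ?_
    have hx0 : (0 : ℝ) < x := hx
    have e : x ^ (-(2 * α)) = (x ^ (-α)) ^ 2 := by
      rw [← Real.rpow_natCast, ← Real.rpow_mul hx0.le]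
      congr 1; push_cast; ring
    show f x θ = lvg (x ^ (-α)) θ
    rw [hf, e]; rfl
  have hd : ∀ θ, HasDerivAt Λ (∫ x in Set.Ioi (0 : ℝ), lvg1 (x ^ (-α)) θ) θ := by
    rw [eΛ]; exact lvΛ_hasDeriv h1 h2
  have ed : deriv Λ = fun θ => ∫ x in Set.Ioi (0 : ℝ), lvg1 (x ^ (-α)) θ :=
    funext fun θ => (hd θ).deriv
  have hdd : ∀ θ, HasDerivAt (deriv Λ) (∫ x in Set.Ioi (0 : ℝ), lvg2 (x ^ (-α)) θ) θ := by
    rw [ed]; exact fun θ => (lvΛ1_hasDeriv h1 h2 θ).2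
  have hpos : ∀ θ, 0 < deriv (deriv Λ) θ := fun θ => by
    rw [(hdd θ).deriv]
    exact lv_int_pos (lvΛ1_hasDeriv h1 h2 θ).1
      fun x hx => lvg2_pos (Real.rpow_pos_of_pos hx _) θ
  have hΛ0 : Λ 0 = 0 := by
    rw [eΛ]; simp [lvg_zero]
  have hd0 : deriv Λ 0 < 0 := by
    rw [ed]
    have := lv_int_pos (lvg1_int h1 h2 0).neg
      fun x hx => neg_pos.2 (lvg1_zero_neg (Real.rpow_pos_of_pos hx (-α)))
    simp only [Pi.neg_apply, integral_neg] at this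
    exact neg_pos.1 this
  have ht : Tendsto (deriv Λ) atTop atTop := by rw [ed]; exact lvΛ1_tendsto h1 h2
  have hsm : StrictMono (deriv Λ) := strictMono_of_deriv_pos hpos
  have hcont : Continuous (deriv Λ) :=
    continuous_iff_continuousAt.2 fun θ => (hdd θ).continuousAt
  have hΛc : Continuous Λ := continuous_iff_continuousAt.2 fun θ => (hd θ).continuousAt
  have hmin : ∀ θs : ℝ, deriv Λ θs = 0 → ∀ θ' : ℝ, θ' ≠ θs → Λ θs < Λ θ' := by
    intro θs h0 θ' hne
    rcases lt_or_gt_of_ne hne with h | h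
    · refine strictAntiOn_of_deriv_neg (convex_Iic θs) hΛc.continuousOn (fun x hx => ?_)
        h.le (Set.mem_Iic.2 le_rfl) h
      rw [interior_Iic] at hx
      rw [← h0]; exact hsm hx
    · refine strictMonoOn_of_deriv_pos (convex_Ici θs) hΛc.continuousOn (fun x hx => ?_)
        (Set.mem_Ici.2 le_rfl) h.le h
      rw [interior_Ici] at hx
      rw [← h0]; exact hsm hx
  refine ⟨fun θ => (hd θ).differentiableAt, fun θ => (hdd θ).differentiableAt, hpos, hΛ0, ?_,
    hd0, ht, ?_, ?_⟩
  · rw [ed]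
    simp only [lvg1_zero]
  · obtain ⟨M, hM0, hM⟩ := ((eventually_ge_atTop (0 : ℝ)).and (ht.eventually_ge_atTop 0)).exists
    obtain ⟨t, ht1, ht2⟩ := intermediate_value_Icc hM0 hcont.continuousOn ⟨hd0.le, hM⟩
    refine ⟨t, ⟨lt_of_le_of_ne ht1.1 ?_, ht2⟩, fun s hs => hsm.injective (hs.2.trans ht2.symm)⟩
    rintro rfl
    linarith
  · intro θs hs h0
    refine ⟨hmin θs h0, ?_⟩
    have := hmin θs h0 0 hs.ne
    linarith
end

section
/- The function I_E is concave and continuously differentiable on [0,1] with I_E(0)=0 and I_E(1)=0, and for every a∈[0,1]: I_E(a) ≤ a·I_E'(0) and I_E(a) ≤ −(1−a)·I_E'(1), where I_E'(0)>0 and I_E'(1)<0 denote the one-sided derivatives at the endpoints. -/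
open MeasureTheory Filter

lemma aux_key {μ : Measure ℝ} (M : ℝ) (hM : 0 < M) (F F' : ℝ → ℝ → ℝ) (bound : ℝ → ℝ)
    (hmeas : ∀ a ∈ Set.Icc 0 M, AEStronglyMeasurable (F a) μ)
    (hF0 : ∀ v, F 0 v = 0)
    (hderiv : ∀ᵐ v ∂μ, ∀ a ∈ Set.Icc 0 M,
      HasDerivWithinAt (fun a => F a v) (F' a v) (Set.Icc 0 M) a)
    (hb : ∀ᵐ v ∂μ, ∀ a ∈ Set.Icc 0 M, |F' a v| ≤ bound v)
    (hbi : Integrable bound μ) :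
    ∀ a ∈ Set.Icc 0 M, HasDerivWithinAt (fun a => ∫ v, F a v ∂μ) (∫ v, F' a v ∂μ)
      (Set.Icc 0 M) a := by
  have hlip : ∀ᵐ v ∂μ, ∀ a ∈ Set.Icc 0 M, ∀ b ∈ Set.Icc 0 M,
      |F b v - F a v| ≤ bound v * |b - a| := by
    filter_upwards [hderiv, hb] with v h1 h2 a ha b hb'
    have := (convex_Icc (0:ℝ) M).norm_image_sub_le_of_norm_hasDerivWithin_le
      (f := fun a => F a v) (f' := fun a => F' a v) (C := bound v) h1
      (fun x hx => by simpa using h2 x hx) ha hb'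
    simpa using this
  have hint : ∀ a ∈ Set.Icc 0 M, Integrable (F a) μ := by
    intro a ha
    refine Integrable.mono' (hbi.mul_const M) (hmeas a ha) ?_
    filter_upwards [hlip, hb] with v h h2
    have := h 0 ⟨le_rfl, hM.le⟩ a ha
    rw [hF0, sub_zero, sub_zero, abs_of_nonneg ha.1] at this
    have h0 : 0 ≤ bound v := (abs_nonneg _).trans (h2 a ha)
    exact this.trans (mul_le_mul_of_nonneg_left ha.2 h0)
  intro a ha
  rw [hasDerivWithinAt_iff_tendsto_slope]
  have hmem : ∀ᶠ b in nhdsWithin a (Set.Icc 0 M \ {a}), b ∈ Set.Icc 0 M \ {a} :=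
    self_mem_nhdsWithin
  have : Tendsto (fun b => ∫ v, slope (fun a => F a v) a b ∂μ)
      (nhdsWithin a (Set.Icc 0 M \ {a})) (nhds (∫ v, F' a v ∂μ)) := by
    refine tendsto_integral_filter_of_dominated_convergence bound ?_ ?_ hbi ?_
    · filter_upwards [hmem] with b hb'
      simp only [slope_def_field]
      exact (((hint b hb'.1).sub (hint a ha)).div_const _).aestronglyMeasurable
    · filter_upwards [hmem] with b hb'
      filter_upwards [hlip] with v hv
      have h := hv a ha b hb'.1
      have hne : 0 < |b - a| := abs_pos.2 (sub_ne_zero.2 hb'.2)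
      rw [slope_def_field, Real.norm_eq_abs, abs_div, div_le_iff₀ hne]
      exact h
    · filter_upwards [hderiv] with v hv
      exact hasDerivWithinAt_iff_tendsto_slope.1 (hv a ha)
  refine this.congr' ?_
  filter_upwards [hmem] with b hb'
  simp only [slope_def_field]
  rw [integral_div, integral_sub (hint b hb'.1) (hint a ha)]

lemma aux_bound_int (C p q : ℝ) (hp : -1 < p) (hq : q < -1) :
    IntegrableOn (fun x : ℝ => if x ≤ 1 then C * x ^ p else C * x ^ q) (Set.Ioi 0) := by
  rw [← Set.Ioc_union_Ioi_eq_Ioi (zero_le_one (α := ℝ))]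
  refine IntegrableOn.union ?_ ?_
  · have h := (intervalIntegral.intervalIntegrable_rpow' (a := 0) (b := 1) hp).1.const_mul C
    refine IntegrableOn.congr_fun h (fun x hx => ?_) measurableSet_Ioc
    simp [hx.2]
  · have h := (integrableOn_Ioi_rpow_of_lt hq one_pos).const_mul C
    refine IntegrableOn.congr_fun h (fun x hx => ?_) measurableSet_Ioi
    simp [not_le.2 (Set.mem_Ioi.1 hx)]

/-- The denominator. -/
noncomputable def auxD (t v : ℝ) : ℝ :=
  Real.exp (t * v) * (1 - Real.exp (-v)) + Real.exp (-v)

lemma auxD_one_le {t v : ℝ} (ht : 0 ≤ t) (hv : 0 ≤ v) : 1 ≤ auxD t v := by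
  unfold auxD
  have h1 : 1 ≤ Real.exp (t * v) := Real.one_le_exp (by positivity)
  have h2 : Real.exp (-v) ≤ 1 := Real.exp_le_one_iff.2 (by linarith)
  nlinarith

lemma aux_exp_sub_one {y : ℝ} : Real.exp y - 1 ≤ y * Real.exp y := by
  have h := Real.add_one_le_exp (-y)
  have h2 : Real.exp (-y) * Real.exp y = 1 := by rw [← Real.exp_add]; simp
  nlinarith [Real.exp_pos y]

lemma aux_quad {v : ℝ} (hv : 0 ≤ v) : |1 - Real.exp (-v) - v| ≤ v ^ 2 := by
  have h := Real.add_one_le_exp (-v)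
  have h1 := aux_exp_sub_one (y := -v)
  rw [abs_le]; constructor <;> nlinarith

lemma aux_h_small {t M v : ℝ} (ht : 0 ≤ t) (htM : t ≤ M) (hv : 0 ≤ v) (hv1 : v ≤ 1) :
    |Real.exp (t * v) * (1 - Real.exp (-v)) / auxD t v - v| ≤ (2 + M * Real.exp M) * v ^ 2 := by
  have hD := auxD_one_le ht hv
  have hD0 : 0 < auxD t v := by linarith
  have e1 : Real.exp (t * v) * (1 - Real.exp (-v)) / auxD t v - v
      = (1 - Real.exp (-v) - v) + Real.exp (-v) * (1 - 1 / auxD t v) := by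
    have : Real.exp (t * v) * (1 - Real.exp (-v)) = auxD t v - Real.exp (-v) := by
      unfold auxD; ring
    rw [this]; field_simp; ring
  have h2 : Real.exp (-v) ≤ 1 := Real.exp_le_one_iff.2 (by linarith)
  have h3 : 1 - 1 / auxD t v ≤ auxD t v - 1 := by
    rw [sub_le_iff_le_add, ← sub_le_iff_le_add', le_div_iff₀ hD0]; nlinarith
  have h3' : 0 ≤ 1 - 1 / auxD t v := by
    rw [sub_nonneg, div_le_one hD0]; exact hD
  have h4 : auxD t v - 1 = (Real.exp (t * v) - 1) * (1 - Real.exp (-v)) := by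
    unfold auxD; ring
  have h5 : 1 - Real.exp (-v) ≤ v := by linarith [Real.add_one_le_exp (-v)]
  have h6 : Real.exp (t * v) ≤ Real.exp M := Real.exp_le_exp.2 (by nlinarith)
  have h7 : Real.exp (t * v) - 1 ≤ M * Real.exp M * v := by
    calc Real.exp (t * v) - 1 ≤ t * v * Real.exp (t * v) := aux_exp_sub_one
      _ ≤ M * v * Real.exp M := by gcongr; nlinarith
      _ = _ := by ring
  have h8 : auxD t v - 1 ≤ M * Real.exp M * v ^ 2 := by
    rw [h4]
    have : 0 ≤ M * Real.exp M * v := by have := ht.trans htM; positivity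
    calc _ ≤ M * Real.exp M * v * v := mul_le_mul h7 h5 (by linarith) this
      _ = _ := by ring
  rw [e1]
  refine (abs_add_le _ _).trans ?_
  rw [abs_of_nonneg (mul_nonneg (Real.exp_pos _).le h3')]
  have := aux_quad hv
  have h9 : Real.exp (-v) * (1 - 1 / auxD t v) ≤ 1 * (1 - 1 / auxD t v) := by gcongr
  nlinarith [sq_nonneg v]

lemma aux_h_large {t M v : ℝ} (ht : 0 ≤ t) (htM : t ≤ M) (hv1 : 1 ≤ v) :
    |Real.exp (t * v) * (1 - Real.exp (-v)) / auxD t v - v| ≤ (2 + M * Real.exp M) * v := by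
  have hv : 0 ≤ v := by linarith
  have hD := auxD_one_le ht hv
  have hD0 : 0 < auxD t v := by linarith
  have h2 : Real.exp (-v) ≤ 1 := Real.exp_le_one_iff.2 (by linarith)
  have hn : 0 ≤ Real.exp (t * v) * (1 - Real.exp (-v)) :=
    mul_nonneg (Real.exp_pos _).le (by linarith)
  have h3 : Real.exp (t * v) * (1 - Real.exp (-v)) / auxD t v ≤ 1 := by
    rw [div_le_one hD0]; unfold auxD; linarith [Real.exp_pos (-v)]
  have h4 : 0 ≤ Real.exp (t * v) * (1 - Real.exp (-v)) / auxD t v := by positivity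
  have h5 : 0 ≤ M * Real.exp M := by have := ht.trans htM; positivity
  rw [abs_le]; constructor <;> nlinarith

lemma aux_r_small {t a v : ℝ} (ht : 0 ≤ t) (ha : 0 ≤ a) (ha1 : a ≤ 1) (hv : 0 ≤ v) (hv1 : v ≤ 1) :
    |Real.exp (t * v) * Real.exp (-a * v) / auxD t v - 1|
      ≤ (2 + Real.exp t + t * Real.exp t) * v := by
  have hD := auxD_one_le ht hv
  have hD0 : 0 < auxD t v := by linarith
  have e1 : Real.exp (t * v) * Real.exp (-a * v) / auxD t v - 1
      = (Real.exp (-v) * (Real.exp (t * v) - 1) - Real.exp (t * v) * (1 - Real.exp (-a * v)))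
        / auxD t v := by
    field_simp; unfold auxD; ring
  have h2 : Real.exp (-v) ≤ 1 := Real.exp_le_one_iff.2 (by linarith)
  have h2' : Real.exp (-a * v) ≤ 1 := Real.exp_le_one_iff.2 (by nlinarith)
  have h5 : 1 - Real.exp (-a * v) ≤ v := by nlinarith [Real.add_one_le_exp (-a * v)]
  have h6 : Real.exp (t * v) ≤ Real.exp t := Real.exp_le_exp.2 (by nlinarith)
  have h1 : 1 ≤ Real.exp (t * v) := Real.one_le_exp (by positivity)
  have h7 : Real.exp (t * v) - 1 ≤ t * Real.exp t * v := by
    calc Real.exp (t * v) - 1 ≤ t * v * Real.exp (t * v) := aux_exp_sub_one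
      _ ≤ t * v * Real.exp t := by gcongr
      _ = _ := by ring
  have hA : Real.exp (-v) * (Real.exp (t * v) - 1) ≤ 1 * (t * Real.exp t * v) :=
    mul_le_mul h2 h7 (by linarith) zero_le_one
  have hA' : 0 ≤ Real.exp (-v) * (Real.exp (t * v) - 1) :=
    mul_nonneg (Real.exp_pos _).le (by linarith)
  have hB : Real.exp (t * v) * (1 - Real.exp (-a * v)) ≤ Real.exp t * v :=
    mul_le_mul h6 h5 (by linarith) (Real.exp_pos _).le
  have hB' : 0 ≤ Real.exp (t * v) * (1 - Real.exp (-a * v)) :=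
    mul_nonneg (Real.exp_pos _).le (by linarith)
  rw [e1, abs_div, abs_of_pos hD0, div_le_iff₀ hD0]
  have hC : 0 ≤ (2 + Real.exp t + t * Real.exp t) * v := by positivity
  refine le_trans ?_ (le_mul_of_one_le_right hC hD)
  have hp : 0 ≤ t * Real.exp t * v := by positivity
  have hp' : 0 ≤ Real.exp t * v := by positivity
  rw [abs_le]; constructor <;> nlinarith

lemma aux_r_large {t a v : ℝ} (ht : 0 ≤ t) (ha : 0 ≤ a) (hv1 : 1 ≤ v) :
    |Real.exp (t * v) * Real.exp (-a * v) / auxD t v - 1|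
      ≤ (2 + Real.exp t + t * Real.exp t) := by
  have hv : 0 ≤ v := by linarith
  have hD := auxD_one_le ht hv
  have hD0 : 0 < auxD t v := by linarith
  have h2' : Real.exp (-a * v) ≤ 1 := Real.exp_le_one_iff.2 (by nlinarith)
  have h2 : Real.exp (-v) ≤ 1 / 2 := by
    have := Real.add_one_le_exp v
    rw [Real.exp_neg, one_div]
    exact inv_anti₀ (by norm_num) (by linarith)
  have h3 : Real.exp (t * v) * Real.exp (-a * v) / auxD t v ≤ 2 := by
    rw [div_le_iff₀ hD0]; unfold auxD; nlinarith [Real.exp_pos (-v), Real.exp_pos (t * v)]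
  have h4 : 0 ≤ Real.exp (t * v) * Real.exp (-a * v) / auxD t v := by positivity
  have h5 : 0 ≤ t * Real.exp t := by positivity
  rw [abs_le]; constructor <;> nlinarith [Real.exp_pos t]

lemma aux_Lambda_deriv (τ α : ℝ) (hτ : τ ∈ Set.Ioo (3 : ℝ) 4) (hα : α = 1 / (τ - 1))
    (t : ℝ) (ht : 0 < t) :
    HasDerivAt (fun θ' => ∫ x in Set.Ioi (0 : ℝ),
      (Real.log (1 + Real.exp (-x ^ (-α)) * (Real.exp (-θ' * x ^ (-α)) - 1))
        + θ' * x ^ (-α) - θ' * x ^ (-(2 * α))))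
      (∫ x in Set.Ioi (0 : ℝ), (Real.exp (t * x ^ (-α)) * (1 - Real.exp (-x ^ (-α)))
        / auxD t (x ^ (-α)) - x ^ (-α)) * x ^ (-α)) t := by
  obtain ⟨hτ3, hτ4⟩ := hτ
  have hs : 0 < τ - 1 := by linarith
  have hα2 : 2 * α < 1 := by rw [hα, mul_one_div, div_lt_one hs]; linarith
  have hα3 : 1 < 3 * α := by rw [hα, mul_one_div, lt_div_iff₀ hs]; linarith
  have hα0 : 0 < α := by linarith
  set M := t + 1 with hMdef
  have hM : 0 < M := by linarith
  have key := aux_key (μ := volume.restrict (Set.Ioi (0:ℝ))) M hM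
    (fun θ' x => Real.log (1 + Real.exp (-x ^ (-α)) * (Real.exp (-θ' * x ^ (-α)) - 1))
        + θ' * x ^ (-α) - θ' * x ^ (-(2 * α)))
    (fun θ' x => (Real.exp (θ' * x ^ (-α)) * (1 - Real.exp (-x ^ (-α)))
        / auxD θ' (x ^ (-α)) - x ^ (-α)) * x ^ (-α))
    (fun x => if x ≤ 1 then (2 + M * Real.exp M) * x ^ (-(2 * α))
      else (2 + M * Real.exp M) * x ^ (-(3 * α)))
    ?_ ?_ ?_ ?_ ?_ t ⟨ht.le, by linarith⟩
  · exact key.hasDerivAt (Icc_mem_nhds ht (by linarith))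
  · intro a _
    apply Measurable.aestronglyMeasurable
    fun_prop
  · intro v; simp
  · refine (ae_restrict_mem measurableSet_Ioi).mono fun x hx a ha => ?_
    have hx : 0 < x := hx
    apply HasDerivAt.hasDerivWithinAt
    have e2 : x ^ (-(2 * α)) = x ^ (-α) * x ^ (-α) := by
      rw [← Real.rpow_add hx]; congr 1; ring
    simp only [e2]
    have hu : 0 < x ^ (-α) := Real.rpow_pos_of_pos hx _
    generalize x ^ (-α) = u at hu
    have hE : Real.exp (-a * u) = (Real.exp (a * u))⁻¹ := by rw [← Real.exp_neg]; ring_nf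
    have hD := auxD_one_le ha.1 hu.le
    have e3 : 1 + Real.exp (-u) * (Real.exp (-a * u) - 1) = auxD a u * Real.exp (-a * u) := by
      rw [hE]; unfold auxD; field_simp; ring
    have h1 : HasDerivAt (fun a : ℝ => -a * u) (-1 * u) a := (hasDerivAt_neg a).mul_const u
    have h2 := ((h1.exp.sub_const 1).const_mul (Real.exp (-u))).const_add 1
    have hne : 1 + Real.exp (-u) * (Real.exp (-a * u) - 1) ≠ 0 := by
      rw [e3]; have := Real.exp_pos (-a * u); positivity
    have h3 := ((h2.log hne).add ((hasDerivAt_id a).mul_const u)).sub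
      ((hasDerivAt_id a).mul_const (u * u))
    refine h3.congr_deriv ?_
    rw [e3]
    have hD0 : auxD a u ≠ 0 := by positivity
    have e4 : Real.exp (a * u) * (1 - Real.exp (-u)) = auxD a u - Real.exp (-u) := by
      unfold auxD; ring
    have := (Real.exp_pos (-a * u)).ne'
    rw [e4]
    field_simp
    ring
  · refine (ae_restrict_mem measurableSet_Ioi).mono fun x hx a ha => ?_
    have hx : 0 < x := hx
    have e2 : x ^ (-(2 * α)) = x ^ (-α) * x ^ (-α) := by
      rw [← Real.rpow_add hx]; congr 1; ring
    have e3 : x ^ (-(3 * α)) = (x ^ (-α)) ^ 2 * x ^ (-α) := by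
      rw [sq, ← Real.rpow_add hx, ← Real.rpow_add hx]; congr 1; ring
    have hu : 0 < x ^ (-α) := Real.rpow_pos_of_pos hx _
    rw [abs_mul, abs_of_pos hu]
    split_ifs with h
    · have h1 : 1 ≤ x ^ (-α) := Real.one_le_rpow_of_pos_of_le_one_of_nonpos hx h (by linarith)
      rw [e2, ← mul_assoc]
      exact mul_le_mul_of_nonneg_right (aux_h_large ha.1 ha.2 h1) hu.le
    · have h1 : x ^ (-α) ≤ 1 := Real.rpow_le_one_of_one_le_of_nonpos (by linarith) (by linarith)
      rw [e3, ← mul_assoc]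
      exact mul_le_mul_of_nonneg_right (aux_h_small ha.1 ha.2 hu.le h1) hu.le
  · exact aux_bound_int _ _ _ (by linarith) (by linarith)

theorem IE_properties
    (τ α : ℝ) (hτ : τ ∈ Set.Ioo (3 : ℝ) 4) (hα : α = 1 / (τ - 1))
    (f : ℝ → ℝ → ℝ)
    (hf : ∀ x θ' : ℝ, f x θ'
      = Real.log (1 + Real.exp (-x ^ (-α)) * (Real.exp (-θ' * x ^ (-α)) - 1))
        + θ' * x ^ (-α) - θ' * x ^ (-(2 * α)))
    (Λ : ℝ → ℝ) (hΛ : ∀ θ', Λ θ' = ∫ x in Set.Ioi (0 : ℝ), f x θ')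
    (θstar : ℝ) (hθstar : ∀ θ', Λ θstar ≤ Λ θ')
    (hθstarpos : 0 < θstar) (hθstarcrit : deriv Λ θstar = 0)
    (IE : ℝ → ℝ)
    (hIE : ∀ a : ℝ, IE a = (τ - 1) * ∫ v in Set.Ioi (0 : ℝ),
      (Real.exp (θstar * v) * (1 - Real.exp (-a * v)) /
          (Real.exp (θstar * v) * (1 - Real.exp (-v)) + Real.exp (-v)) - a * v)
        * v ^ (-(τ - 1))) :
    ConcaveOn ℝ (Set.Icc (0 : ℝ) 1) IE ∧
    ∃ IE' : ℝ → ℝ,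
      ContinuousOn IE' (Set.Icc (0 : ℝ) 1) ∧
      (∀ a ∈ Set.Icc (0 : ℝ) 1, HasDerivWithinAt IE (IE' a) (Set.Icc (0 : ℝ) 1) a) ∧
      IE 0 = 0 ∧ IE 1 = 0 ∧
      0 < IE' 0 ∧ IE' 1 < 0 ∧
      ∀ a ∈ Set.Icc (0 : ℝ) 1, IE a ≤ a * IE' 0 ∧ IE a ≤ -(1 - a) * IE' 1 := by
  have hLd := aux_Lambda_deriv τ α hτ hα θstar hθstarpos
  have hΛeq : Λ = fun θ' => ∫ x in Set.Ioi (0 : ℝ),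
      (Real.log (1 + Real.exp (-x ^ (-α)) * (Real.exp (-θ' * x ^ (-α)) - 1))
        + θ' * x ^ (-α) - θ' * x ^ (-(2 * α))) := by
    funext θ'; rw [hΛ]; simp only [hf]
  rw [← hΛeq] at hLd
  have hL0 := hLd.deriv.symm.trans hθstarcrit
  obtain ⟨hτ3, hτ4⟩ := hτ
  have hs : 0 < τ - 1 := by linarith
  have hIE0 : IE 0 = 0 := by rw [hIE]; simp
  have hIE1 : IE 1 = 0 := by
    rw [← integral_comp_rpow_Ioi _ (p := -(τ - 1)) (neg_ne_zero.2 hs.ne')] at hL0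
    rw [hIE, ← integral_const_mul]
    refine Eq.trans ?_ hL0
    refine setIntegral_congr_fun measurableSet_Ioi fun v hv => ?_
    have hv : 0 < v := hv
    have e1 : (v ^ (-(τ - 1))) ^ (-α) = v := by
      rw [← Real.rpow_mul hv.le, hα, neg_mul_neg, mul_one_div_cancel hs.ne', Real.rpow_one]
    have e2 : v ^ (-(τ - 1)) = v ^ (-(τ - 1) - 1) * v := by
      rw [Real.rpow_sub_one hv.ne']; field_simp
    simp only [e1, smul_eq_mul, abs_neg, abs_of_pos hs]
    rw [e2]
    simp only [auxD, neg_mul, one_mul]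
    ring
  set G : ℝ → ℝ → ℝ := fun a v =>
    (Real.exp (θstar * v) * (v * Real.exp (-a * v)) / auxD θstar v - v) * v ^ (-(τ - 1)) with hG
  set C := 2 + Real.exp θstar + θstar * Real.exp θstar with hC
  set bound : ℝ → ℝ := fun v => if v ≤ 1 then C * v ^ (2 - (τ - 1)) else C * v ^ (1 - (τ - 1))
    with hbound
  have hbi : Integrable bound (volume.restrict (Set.Ioi 0)) :=
    aux_bound_int _ _ _ (by linarith) (by linarith)
  have hGb : ∀ᵐ v ∂(volume.restrict (Set.Ioi (0:ℝ))), ∀ a ∈ Set.Icc (0:ℝ) 1,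
      |G a v| ≤ bound v := by
    refine (ae_restrict_mem measurableSet_Ioi).mono fun v hv a ha => ?_
    have hv : 0 < v := hv
    have e1 : v ^ (1 - (τ - 1)) = v * v ^ (-(τ - 1)) := by
      rw [sub_eq_add_neg, Real.rpow_add hv, Real.rpow_one]
    have e2 : v ^ (2 - (τ - 1)) = v * (v * v ^ (-(τ - 1))) := by
      rw [sub_eq_add_neg, Real.rpow_add hv, Real.rpow_two]; ring
    have hu : 0 < v * v ^ (-(τ - 1)) := mul_pos hv (Real.rpow_pos_of_pos hv _)
    have e3 : G a v = (Real.exp (θstar * v) * Real.exp (-a * v) / auxD θstar v - 1)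
        * (v * v ^ (-(τ - 1))) := by
      simp only [hG]; ring
    rw [e3, abs_mul, abs_of_pos hu, hbound]
    simp only
    split_ifs with h
    · rw [e2, ← mul_assoc C]
      exact mul_le_mul_of_nonneg_right
        (aux_r_small hθstarpos.le ha.1 ha.2 hv.le h) hu.le
    · rw [e1]
      exact mul_le_mul_of_nonneg_right
        (aux_r_large hθstarpos.le ha.1 (not_le.1 h).le) hu.le
  have hGm : ∀ a, AEStronglyMeasurable (G a) (volume.restrict (Set.Ioi (0:ℝ))) := by
    intro a
    apply Measurable.aestronglyMeasurable
    simp only [hG, auxD]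
    fun_prop
  have hGi : ∀ a ∈ Set.Icc (0:ℝ) 1, Integrable (G a) (volume.restrict (Set.Ioi (0:ℝ))) :=
    fun a ha => hbi.mono' (hGm a) (hGb.mono fun v hv => hv a ha)
  set IE' : ℝ → ℝ := fun a => (τ - 1) * ∫ v in Set.Ioi (0:ℝ), G a v with hIE'
  have hcont : ContinuousOn IE' (Set.Icc (0:ℝ) 1) := by
    refine ContinuousOn.mul continuousOn_const fun a ha => ?_
    refine continuousWithinAt_of_dominated (bound := bound)
      (Eventually.of_forall fun a => hGm a) ?_ hbi ?_
    · filter_upwards [self_mem_nhdsWithin] with b hb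
      exact hGb.mono fun v hv => hv b hb
    · refine Eventually.of_forall fun v => Continuous.continuousWithinAt ?_
      simp only [hG]
      fun_prop
  have hder : ∀ a ∈ Set.Icc (0 : ℝ) 1,
      HasDerivWithinAt IE (IE' a) (Set.Icc (0 : ℝ) 1) a := by
    have key := aux_key (μ := volume.restrict (Set.Ioi (0:ℝ))) 1 one_pos
      (fun a v => (Real.exp (θstar * v) * (1 - Real.exp (-a * v)) /
          (Real.exp (θstar * v) * (1 - Real.exp (-v)) + Real.exp (-v)) - a * v)
        * v ^ (-(τ - 1))) G bound ?_ ?_ ?_ hGb hbi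
    · intro a ha
      have h := (key a ha).const_mul (τ - 1)
      rw [show IE = _ from funext hIE]
      exact h
    · intro a _
      apply Measurable.aestronglyMeasurable
      fun_prop
    · intro v; simp
    · refine Eventually.of_forall fun v a _ => HasDerivAt.hasDerivWithinAt ?_
      have h1 : HasDerivAt (fun a : ℝ => -a * v) (-1 * v) a := (hasDerivAt_neg a).mul_const v
      have h2 := (((((h1.exp.const_sub 1).const_mul (Real.exp (θstar * v))).div_const
        (auxD θstar v)).sub ((hasDerivAt_id a).mul_const v)).mul_const (v ^ (-(τ - 1))))
      refine h2.congr_deriv ?_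
      simp only [hG]
      ring
  have hanti : StrictAntiOn IE' (Set.Icc (0:ℝ) 1) := by
    intro a ha b hb hab
    simp only [hIE']
    refine mul_lt_mul_of_pos_left ?_ hs
    have hlt : ∀ v ∈ Set.Ioi (0:ℝ), 0 < G a v - G b v := by
      intro v hv
      have hv : 0 < v := hv
      have e : G a v - G b v = Real.exp (θstar * v) * v *
          (Real.exp (-a * v) - Real.exp (-b * v)) / auxD θstar v * v ^ (-(τ - 1)) := by
        simp only [hG]; ring
      have h1 : 0 < Real.exp (-a * v) - Real.exp (-b * v) := by
        rw [sub_pos, Real.exp_lt_exp]; nlinarith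
      have hD := auxD_one_le hθstarpos.le hv.le
      have hD0 : 0 < auxD θstar v := by linarith
      have := Real.rpow_pos_of_pos hv (-(τ - 1))
      rw [e]; positivity
    rw [← sub_pos, ← integral_sub (hGi a ha) (hGi b hb)]
    rw [setIntegral_pos_iff_support_of_nonneg_ae]
    · have : Function.support (fun v => G a v - G b v) ∩ Set.Ioi 0 = Set.Ioi (0:ℝ) := by
        rw [Set.inter_eq_right]
        exact fun v hv => (hlt v hv).ne'
      rw [this]; simp
    · exact (ae_restrict_mem measurableSet_Ioi).mono fun v hv => (hlt v hv).le
    · exact (hGi a ha).sub (hGi b hb)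
  have hIEc : ContinuousOn IE (Set.Icc (0:ℝ) 1) := fun a ha => (hder a ha).continuousWithinAt
  have hder' : ∀ a ∈ Set.Ioo (0:ℝ) 1, HasDerivAt IE (IE' a) a := fun a ha =>
    (hder a (Set.Ioo_subset_Icc_self ha)).hasDerivAt (Icc_mem_nhds ha.1 ha.2)
  have h0m : (0:ℝ) ∈ Set.Icc (0:ℝ) 1 := ⟨le_rfl, zero_le_one⟩
  have h1m : (1:ℝ) ∈ Set.Icc (0:ℝ) 1 := ⟨zero_le_one, le_rfl⟩
  obtain ⟨c, hc, hc0⟩ := exists_hasDerivAt_eq_zero (f := IE) (f' := IE') one_pos hIEc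
    (hIE0.trans hIE1.symm) hder'
  refine ⟨?_, IE', hcont, hder, hIE0, hIE1, ?_, ?_, ?_⟩
  · refine AntitoneOn.concaveOn_of_deriv (convex_Icc 0 1) hIEc ?_ ?_
    · rw [interior_Icc]
      exact fun a ha => (hder' a ha).differentiableAt.differentiableWithinAt
    · rw [interior_Icc]
      intro a ha b hb hab
      rw [(hder' a ha).deriv, (hder' b hb).deriv]
      exact hanti.antitoneOn (Set.Ioo_subset_Icc_self ha) (Set.Ioo_subset_Icc_self hb) hab
  · refine hc0.symm.trans_lt ?_; exact hanti h0m (Set.Ioo_subset_Icc_self hc) hc.1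
  · refine lt_of_lt_of_eq ?_ hc0; exact hanti (Set.Ioo_subset_Icc_self hc) h1m hc.2
  · intro a ha
    constructor
    · rcases ha.1.eq_or_lt with h | h
      · subst h; simp [hIE0]
      · obtain ⟨d, hd, hd'⟩ := exists_hasDerivAt_eq_slope IE IE' h
          (hIEc.mono (Set.Icc_subset_Icc le_rfl ha.2))
          (fun x hx => hder' x ⟨hx.1, hx.2.trans_le ha.2⟩)
        have hle : IE' d ≤ IE' 0 := hanti.antitoneOn h0m
          ⟨hd.1.le, hd.2.le.trans ha.2⟩ hd.1.le
        rw [hd', hIE0, sub_zero, sub_zero, div_le_iff₀ h] at hle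
        linarith
    · rcases ha.2.eq_or_lt with h | h
      · subst h; simp [hIE1]
      · obtain ⟨d, hd, hd'⟩ := exists_hasDerivAt_eq_slope IE IE' h
          (hIEc.mono (Set.Icc_subset_Icc ha.1 le_rfl))
          (fun x hx => hder' x ⟨ha.1.trans_lt hx.1, hx.2⟩)
        have hle : IE' 1 ≤ IE' d := hanti.antitoneOn
          ⟨ha.1.trans hd.1.le, hd.2.le⟩ h1m hd.2.le
        rw [hd', hIE1, le_div_iff₀ (by linarith)] at hle
        linarith
end

section
/- The following asymptotics hold near the endpoints: (i) as a→1, J_V(a) = −(1−a)·J_V'(1)·(1+o(1)) with J_V'(1)<0; (ii) as a→0, I_V(a) = a^{τ−3}·𝓘_V·(1+o(1)), where 𝓘_V = (τ−1)∫_0^∞ (1−e^{−y}) e^{−y} y^{−(τ−2)} dy; consequently there exist constants 0<c̲<c̄<∞ and ε>0 such that c̲ a^{τ−3} ≤ I_V(a) ≤ c̄ a^{τ−3} for every a∈(0,ε]. -/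
open MeasureTheory Filter

/-- Two-sided power domination on the half line gives integrability. -/
lemma aux_integrable (h : ℝ → ℝ) (hm : Measurable h) (r t A B : ℝ) (hr : -1 < r) (ht : t < -1)
    (h1 : ∀ x, 0 < x → x ≤ 1 → |h x| ≤ A * x ^ r)
    (h2 : ∀ x, 1 < x → |h x| ≤ B * x ^ t) : IntegrableOn h (Set.Ioi 0) := by
  rw [← Set.Ioc_union_Ioi_eq_Ioi (zero_le_one (α := ℝ))]
  refine IntegrableOn.union ?_ ?_
  · have : IntegrableOn (fun x : ℝ => A * x ^ r) (Set.Ioc 0 1) := by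
      have := (intervalIntegral.intervalIntegrable_rpow' (a := 0) (b := 1) hr).1
      exact this.const_mul A
    refine Integrable.mono' this hm.aestronglyMeasurable ?_
    filter_upwards [ae_restrict_mem measurableSet_Ioc] with x hx
    exact h1 x hx.1 hx.2
  · have : IntegrableOn (fun x : ℝ => B * x ^ t) (Set.Ioi 1) :=
      (integrableOn_Ioi_rpow_of_lt ht one_pos).const_mul B
    refine Integrable.mono' this hm.aestronglyMeasurable ?_
    filter_upwards [ae_restrict_mem measurableSet_Ioi] with x hx
    exact h2 x hx

lemma aux_pos (h : ℝ → ℝ) (hfin : IntegrableOn h (Set.Ioi 0)) (hpos : ∀ x, 0 < x → 0 < h x) :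
    0 < ∫ x in Set.Ioi (0 : ℝ), h x := by
  refine (setIntegral_pos_iff_support_of_nonneg_ae ?_ hfin).2 ?_
  · filter_upwards [ae_restrict_mem measurableSet_Ioi] with x hx using (hpos x hx).le
  · have : Function.support h ∩ Set.Ioi 0 = Set.Ioi 0 :=
      Set.inter_eq_right.2 fun x hx => (hpos x hx).ne'
    rw [this]; simp

lemma aux_min_integrable (s : ℝ) (h1 : 1 < s) (h2 : s < 2) :
    IntegrableOn (fun v : ℝ => min v 1 * v ^ (-s)) (Set.Ioi 0) := by
  refine aux_integrable _ (by fun_prop) (1 - s) (-s) 1 1 (by linarith) (by linarith) ?_ ?_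
  · intro x hx hx1
    rw [min_eq_left hx1, abs_of_nonneg (by positivity), one_mul, sub_eq_add_neg,
      Real.rpow_add hx, Real.rpow_one]
  · intro x hx
    have : 0 < x := by linarith
    rw [min_eq_right hx.le, abs_of_nonneg (by positivity)]

lemma aux_exp_quad (x : ℝ) (hx : 0 ≤ x) : x - (1 - Real.exp (-x)) ≤ x ^ 2 / 2 := by
  have h := Real.quadratic_le_exp_of_nonneg hx
  have h3 : Real.exp (-x) * Real.exp x = 1 := by rw [← Real.exp_add]; simp
  have h4 : Real.exp (-x) ≤ 1 / (1 + x + x ^ 2 / 2) := by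
    rw [le_div_iff₀ (by positivity)]
    nlinarith [Real.exp_pos (-x)]
  have : 1 / (1 + x + x ^ 2 / 2) ≤ 1 - x + x ^ 2 / 2 := by
    rw [div_le_iff₀ (by positivity)]
    nlinarith [pow_nonneg hx 3, pow_nonneg hx 4]
  linarith

/-- The basic two-sided bound for the integrand with `θ = -s < 0`. -/
lemma aux_f_bounds (v s : ℝ) (hv : 0 < v) (hs : 0 < s) :
    0 < Real.log (1 + Real.exp (-v) * (Real.exp (s * v) - 1)) - s * v + s * v ^ 2 ∧
    Real.log (1 + Real.exp (-v) * (Real.exp (s * v) - 1)) - s * v + s * v ^ 2 ≤ s * v ^ 2 ∧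
    Real.log (1 + Real.exp (-v) * (Real.exp (s * v) - 1)) - s * v + s * v ^ 2
      ≤ (s + s ^ 2) / 2 * v ^ 3 := by
  have hsv : 0 < s * v := by positivity
  have e1 : Real.exp (-v) < 1 := by rw [Real.exp_lt_one_iff]; linarith
  have e2 : Real.exp (-(s * v)) < 1 := by rw [Real.exp_lt_one_iff]; linarith
  have e0 := Real.exp_pos (-v)
  have e3 := Real.exp_pos (-(s*v))
  have hse : Real.exp (s * v) * Real.exp (-(s * v)) = 1 := by rw [← Real.exp_add]; simp
  have hpos : 0 < 1 - (1 - Real.exp (-v)) * (1 - Real.exp (-(s * v))) := by nlinarith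
  have hfac : 1 + Real.exp (-v) * (Real.exp (s * v) - 1)
      = Real.exp (s * v) * (1 - (1 - Real.exp (-v)) * (1 - Real.exp (-(s * v)))) := by
    linear_combination (-1 + Real.exp (-v)) * hse
  have hlog : Real.log (1 + Real.exp (-v) * (Real.exp (s * v) - 1))
      = s * v + Real.log (1 - (1 - Real.exp (-v)) * (1 - Real.exp (-(s * v)))) := by
    rw [hfac, Real.log_mul (Real.exp_pos _).ne' hpos.ne', Real.log_exp]
  have hle := Real.log_le_sub_one_of_pos hpos
  have q1 := aux_exp_quad v hv.le
  have q2 := aux_exp_quad (s * v) hsv.le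
  have l1 := Real.add_one_lt_exp (x := -v) (by linarith)
  have l2 := Real.add_one_lt_exp (x := -(s * v)) (by linarith)
  refine ⟨?_, ?_, ?_⟩
  · have hconv : Real.exp (Real.exp (-v) * (s * v)) ≤ 1 + Real.exp (-v) * (Real.exp (s * v) - 1) := by
      have := convexOn_exp.2 (Set.mem_univ 0) (Set.mem_univ (s * v))
        (show 0 ≤ 1 - Real.exp (-v) by linarith) e0.le (by ring)
      simp only [smul_eq_mul, mul_zero, zero_add, Real.exp_zero] at this
      linarith
    have := (Real.le_log_iff_exp_le (lt_of_lt_of_le (Real.exp_pos _) hconv)).2 hconv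
    nlinarith
  · rw [hlog]; nlinarith
  · rw [hlog]
    have a1 : (v - (1 - Real.exp (-v))) * (s * v) ≤ v ^ 2 / 2 * (s * v) :=
      mul_le_mul_of_nonneg_right q1 hsv.le
    have a2 : (1 - Real.exp (-v)) * (s * v - (1 - Real.exp (-(s * v)))) ≤ v * ((s * v) ^ 2 / 2) :=
      mul_le_mul (by linarith) q2 (by linarith) hv.le
    nlinarith

lemma aux_theta (τ α : ℝ) (hτ : τ ∈ Set.Ioo (3 : ℝ) 4) (hα : α = 1 / (τ - 1))
    (f : ℝ → ℝ → ℝ)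
    (hf : ∀ x θ' : ℝ, f x θ'
      = Real.log (1 + Real.exp (-x ^ (-α)) * (Real.exp (-θ' * x ^ (-α)) - 1))
        + θ' * x ^ (-α) - θ' * x ^ (-(2 * α)))
    (Λ : ℝ → ℝ) (hΛ : ∀ θ', Λ θ' = ∫ x in Set.Ioi (0 : ℝ), f x θ')
    (θstar : ℝ) (hθstar : ∀ θ', Λ θstar ≤ Λ θ') : 0 ≤ θstar := by
  obtain ⟨hτ3, hτ4⟩ := hτ
  by_contra hneg
  push Not at hneg
  have hα1 : 2 * α < 1 := by
    rw [hα, ← mul_div_assoc, div_lt_one (by linarith)]; linarith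
  have hα2 : 1 < 3 * α := by
    rw [hα, ← mul_div_assoc, one_lt_div (by linarith)]; linarith
  have h0 : Λ 0 = 0 := by
    rw [hΛ]; simp [hf]
  have hform : ∀ x, 0 < x → f x θstar =
      Real.log (1 + Real.exp (-(x ^ (-α))) * (Real.exp (-θstar * x ^ (-α)) - 1))
        - (-θstar) * x ^ (-α) + (-θstar) * (x ^ (-α)) ^ 2 := by
    intro x hx
    have : x ^ (-(2 * α)) = (x ^ (-α)) ^ 2 := by
      rw [← Real.rpow_natCast, ← Real.rpow_mul hx.le]; congr 1; push_cast; ring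
    rw [hf, this]; ring
  have hb := fun (x : ℝ) (hx : 0 < x) =>
    aux_f_bounds (x ^ (-α)) (-θstar) (Real.rpow_pos_of_pos hx _) (by linarith)
  have hpos : ∀ x, 0 < x → 0 < f x θstar := fun x hx => by
    rw [hform x hx]; exact (hb x hx).1
  have hmeas : Measurable (fun x => f x θstar) := by
    simp only [hf]; fun_prop
  have hfin : IntegrableOn (fun x => f x θstar) (Set.Ioi 0) := by
    refine aux_integrable _ hmeas (-(2 * α)) (-(3 * α)) (-θstar) ((-θstar + (-θstar) ^ 2) / 2)
      (by linarith) (by linarith) ?_ ?_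
    · intro x hx _
      have : x ^ (-(2 * α)) = (x ^ (-α)) ^ 2 := by
        rw [← Real.rpow_natCast, ← Real.rpow_mul hx.le]; congr 1; push_cast; ring
      rw [abs_of_pos (hpos x hx), hform x hx, this]
      exact (hb x hx).2.1
    · intro x hx1
      have hx : 0 < x := by linarith
      have : x ^ (-(3 * α)) = (x ^ (-α)) ^ 3 := by
        rw [← Real.rpow_natCast, ← Real.rpow_mul hx.le]; congr 1; push_cast; ring
      rw [abs_of_pos (hpos x hx), hform x hx, this]
      exact (hb x hx).2.2
  have : 0 < Λ θstar := by
    rw [hΛ]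
    exact aux_pos _ hfin hpos
  linarith [hθstar 0]

/-- the common weight -/
noncomputable def wgt (θ v : ℝ) : ℝ := 1 / (1 - Real.exp (-v) + Real.exp (-(1 + θ) * v))

lemma wgt_pos (θ v : ℝ) (hv : 0 < v) : 0 < wgt θ v := by
  have e1 : Real.exp (-v) < 1 := by rw [Real.exp_lt_one_iff]; linarith
  have := Real.exp_pos (-(1 + θ) * v)
  unfold wgt
  exact one_div_pos.2 (by linarith)

lemma wgt_le (θ v : ℝ) (hθ : 0 ≤ θ) (hv : 0 < v) : wgt θ v ≤ Real.exp (1 + θ) := by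
  have e1 : Real.exp (-v) < 1 := by rw [Real.exp_lt_one_iff]; linarith
  have e2 := Real.exp_pos (-(1 + θ) * v)
  unfold wgt
  rw [← neg_neg (1 + θ), Real.exp_neg (-(1 + θ)), neg_neg, ← one_div]
  apply one_div_le_one_div_of_le (Real.exp_pos _)
  rcases le_total v 1 with h | h
  · have : Real.exp (-(1 + θ)) ≤ Real.exp (-(1 + θ) * v) := Real.exp_le_exp.2 (by nlinarith)
    linarith
  · have h1 : Real.exp (-(1 + θ)) ≤ Real.exp (-1) := Real.exp_le_exp.2 (by linarith)
    have h2 : Real.exp (-v) ≤ Real.exp (-1) := Real.exp_le_exp.2 (by linarith)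
    have h3 := Real.exp_neg_one_lt_half
    linarith

lemma wgt_mul_le (θ v : ℝ) (hv : 0 < v) : wgt θ v * (1 - Real.exp (-v)) ≤ 1 := by
  have e1 : Real.exp (-v) < 1 := by rw [Real.exp_lt_one_iff]; linarith
  have e2 := Real.exp_pos (-(1 + θ) * v)
  unfold wgt
  rw [one_div, inv_mul_le_iff₀ (by linarith)]
  linarith

lemma wgt_div (θ v u : ℝ) : Real.exp (θ * v) * u /
    (Real.exp (θ * v) * (1 - Real.exp (-v)) + Real.exp (-v)) = wgt θ v * u := by
  have : Real.exp (-v) = Real.exp (θ * v) * Real.exp (-(1 + θ) * v) := by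
    rw [← Real.exp_add]; congr 1; ring
  have h2 : Real.exp (θ * v) * (1 - Real.exp (-v)) + Real.exp (-v)
     = Real.exp (θ * v) * (1 - Real.exp (-v) + Real.exp (-(1 + θ) * v)) := by
    rw [mul_add, ← this]
  rw [h2, mul_div_mul_left _ _ (Real.exp_pos _).ne', wgt]; ring

lemma wgt_tendsto (θ : ℝ) (hθ : 0 ≤ θ) : Tendsto (wgt θ) atTop (nhds 1) := by
  have h1 : Tendsto (fun v : ℝ => Real.exp (-v)) atTop (nhds 0) :=
    Real.tendsto_exp_neg_atTop_nhds_zero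
  have h2 : Tendsto (fun v : ℝ => Real.exp (-(1 + θ) * v)) atTop (nhds 0) := by
    apply Real.tendsto_exp_atBot.comp
    exact tendsto_id.const_mul_atTop_of_neg (by linarith)
  have := ((h1.const_sub 1).add h2)
  have := (tendsto_const_nhds (x := (1:ℝ))).div this (by norm_num)
  rw [sub_zero, add_zero, div_one] at this
  exact this

lemma wgt_meas (θ : ℝ) : Measurable (wgt θ) := by unfold wgt; fun_prop

lemma aux_one_sub_exp (y : ℝ) : 1 - Real.exp (-y) ≤ min y 1 := by
  have := Real.add_one_le_exp (-y)
  have := Real.exp_pos (-y)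
  exact le_min (by linarith) (by linarith)

lemma aux_IV (τ θ : ℝ) (hτ3 : 3 < τ) (hτ4 : τ < 4) (hθ : 0 ≤ θ) :
    Tendsto (fun a : ℝ => (∫ v in Set.Ioi (0 : ℝ),
      (wgt θ v * (1 - Real.exp (-a * v))) * (1 - wgt θ v * (1 - Real.exp (-a * v)))
        * v ^ (-(τ - 2))) / a ^ (τ - 3)) (nhdsWithin 0 (Set.Ioi (0 : ℝ)))
      (nhds (∫ y in Set.Ioi (0 : ℝ),
      (1 - Real.exp (-y)) * Real.exp (-y) * y ^ (-(τ - 2)))) := by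
  have hev : ∀ᶠ a : ℝ in nhdsWithin 0 (Set.Ioi (0 : ℝ)), 0 < a ∧ a < 1 :=
    Ioo_mem_nhdsGT one_pos
  have hwm := wgt_meas θ
  have key : Tendsto (fun a : ℝ => ∫ y in Set.Ioi (0 : ℝ),
      (wgt θ (a⁻¹ * y) * (1 - Real.exp (-y))) * (1 - wgt θ (a⁻¹ * y) * (1 - Real.exp (-y)))
        * y ^ (-(τ - 2))) (nhdsWithin 0 (Set.Ioi (0 : ℝ)))
      (nhds (∫ y in Set.Ioi (0 : ℝ),
      (1 - Real.exp (-y)) * Real.exp (-y) * y ^ (-(τ - 2)))) := by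
    refine tendsto_integral_filter_of_dominated_convergence
      (fun y => Real.exp (1 + θ) * (min y 1 * y ^ (-(τ - 2)))) ?_ ?_ ?_ ?_
    · refine Eventually.of_forall fun a => Measurable.aestronglyMeasurable ?_
      fun_prop
    · filter_upwards [hev] with a ha
      filter_upwards [ae_restrict_mem measurableSet_Ioi] with y hy
      have hy : 0 < y := hy
      have hay : 0 < a⁻¹ * y := mul_pos (inv_pos.2 ha.1) hy
      have e1 : Real.exp (-y) < 1 := by rw [Real.exp_lt_one_iff]; linarith
      have w0 := wgt_pos θ _ hay
      have w1 := wgt_le θ _ hθ hay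
      have w2 := wgt_mul_le θ _ hay
      have hle : y ≤ a⁻¹ * y := by
        have := (one_le_inv₀ ha.1).2 ha.2.le
        nlinarith
      have e2 : Real.exp (-(a⁻¹ * y)) ≤ Real.exp (-y) := Real.exp_le_exp.2 (by linarith)
      have p0 : 0 ≤ wgt θ (a⁻¹ * y) * (1 - Real.exp (-y)) := mul_nonneg w0.le (by linarith)
      have p1 : wgt θ (a⁻¹ * y) * (1 - Real.exp (-y)) ≤ 1 := by nlinarith
      have p2 : wgt θ (a⁻¹ * y) * (1 - Real.exp (-y)) ≤ Real.exp (1 + θ) * min y 1 :=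
        mul_le_mul w1 (aux_one_sub_exp y) (by linarith) (Real.exp_pos _).le
      rw [Real.norm_eq_abs, abs_of_nonneg (by
        have := sub_nonneg.2 p1
        positivity), ← mul_assoc]
      apply mul_le_mul_of_nonneg_right _ (by positivity)
      nlinarith
    · exact (aux_min_integrable (τ - 2) (by linarith) (by linarith)).const_mul _
    · filter_upwards [ae_restrict_mem measurableSet_Ioi] with y hy
      have hy : 0 < y := hy
      have hw : Tendsto (fun a : ℝ => wgt θ (a⁻¹ * y)) (nhdsWithin 0 (Set.Ioi (0 : ℝ))) (nhds 1) :=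
        (wgt_tendsto θ hθ).comp (tendsto_inv_nhdsGT_zero.atTop_mul_const hy)
      have h1 := hw.mul_const (1 - Real.exp (-y))
      have h2 := (h1.mul (h1.const_sub 1)).mul_const (y ^ (-(τ - 2)))
      convert h2 using 2
      ring
  refine key.congr' ?_
  filter_upwards [hev] with a ha
  have ha0 := ha.1
  have hsub := integral_comp_mul_left_Ioi (fun v : ℝ => (wgt θ v * (1 - Real.exp (-a * v))) *
    (1 - wgt θ v * (1 - Real.exp (-a * v))) * v ^ (-(τ - 2))) 0 (inv_pos.2 ha0)
  simp only [mul_zero, inv_inv, smul_eq_mul] at hsub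
  rw [eq_div_iff (Real.rpow_pos_of_pos ha0 _).ne', ← mul_right_inj' ha0.ne', ← hsub,
    ← integral_mul_const, ← integral_const_mul]
  refine setIntegral_congr_fun measurableSet_Ioi fun y hy => ?_
  have hy : 0 < y := hy
  have r1 : -a * (a⁻¹ * y) = -y := by field_simp
  have r2 : (a⁻¹ * y) ^ (-(τ - 2)) = a * a ^ (τ - 3) * y ^ (-(τ - 2)) := by
    rw [Real.mul_rpow (by positivity) hy.le, Real.inv_rpow ha0.le, Real.rpow_neg ha0.le, inv_inv,
      ← Real.rpow_one_add' ha0.le (by linarith)]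
    congr 2; ring
  simp only [r1, r2]
  ring

lemma aux_JV (τ θ : ℝ) (hτ3 : 3 < τ) (hτ4 : τ < 4) (hθ : 0 ≤ θ) :
    0 < (∫ v in Set.Ioi (0 : ℝ), wgt θ v * (v * Real.exp (-v)) * v ^ (-(τ - 2))) ∧
    Tendsto (fun a : ℝ => (∫ v in Set.Ioi (0 : ℝ),
      (wgt θ v * (Real.exp (-a * v) - Real.exp (-v))) *
        (1 - wgt θ v * (Real.exp (-a * v) - Real.exp (-v)))
        * v ^ (-(τ - 2))) / (1 - a)) (nhdsWithin 1 (Set.Ico (0 : ℝ) 1))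
      (nhds (∫ v in Set.Ioi (0 : ℝ), wgt θ v * (v * Real.exp (-v)) * v ^ (-(τ - 2)))) := by
  have hwm := wgt_meas θ
  have hve : ∀ v : ℝ, 0 < v → v * Real.exp (-(v / 2)) ≤ 2 * min v 1 := by
    intro v hv
    have h1 := Real.add_one_le_exp (v / 2)
    have h2 : Real.exp (v / 2) * Real.exp (-(v / 2)) = 1 := by rw [← Real.exp_add]; simp
    have h3 : Real.exp (-(v / 2)) ≤ 1 := by rw [Real.exp_le_one_iff]; linarith
    have h4 := Real.exp_pos (-(v / 2))
    rw [mul_min_of_nonneg _ _ (by norm_num)]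
    exact le_min (by nlinarith) (by nlinarith)
  have hbint : IntegrableOn (fun y : ℝ => 2 * Real.exp (1 + θ) * (min y 1 * y ^ (-(τ - 2))))
      (Set.Ioi 0) := (aux_min_integrable (τ - 2) (by linarith) (by linarith)).const_mul _
  constructor
  · have hpos : ∀ v : ℝ, 0 < v → 0 < wgt θ v * (v * Real.exp (-v)) * v ^ (-(τ - 2)) := by
      intro v hv
      have := wgt_pos θ v hv
      positivity
    have hfin : IntegrableOn (fun v : ℝ => wgt θ v * (v * Real.exp (-v)) * v ^ (-(τ - 2)))
        (Set.Ioi 0) := by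
      refine Integrable.mono' hbint (Measurable.aestronglyMeasurable (by fun_prop)) ?_
      filter_upwards [ae_restrict_mem measurableSet_Ioi] with v hv
      have hv : 0 < v := hv
      rw [Real.norm_eq_abs, abs_of_pos (hpos v hv), ← mul_assoc (2 * Real.exp (1 + θ))]
      apply mul_le_mul_of_nonneg_right _ (by positivity)
      have e : Real.exp (-v) ≤ Real.exp (-(v / 2)) := Real.exp_le_exp.2 (by linarith)
      have : v * Real.exp (-v) ≤ 2 * min v 1 :=
        (mul_le_mul_of_nonneg_left e hv.le).trans (hve v hv)
      have := mul_le_mul (wgt_le θ v hθ hv) this (by positivity) (Real.exp_pos _).le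
      linarith
    exact aux_pos _ hfin hpos
  have hev : ∀ᶠ a : ℝ in nhdsWithin 1 (Set.Ico (0 : ℝ) 1), 1 / 2 < a ∧ a < 1 := by
    refine Filter.Eventually.and ?_ ?_
    · exact nhdsWithin_le_nhds (Ioi_mem_nhds (by norm_num))
    · filter_upwards [self_mem_nhdsWithin] with a ha using ha.2
  simp only [← integral_div]
  refine tendsto_integral_filter_of_dominated_convergence
      (fun y => 2 * Real.exp (1 + θ) * (min y 1 * y ^ (-(τ - 2)))) ?_ ?_ hbint ?_
  · refine Eventually.of_forall fun a => Measurable.aestronglyMeasurable ?_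
    fun_prop
  · filter_upwards [hev] with a ha
    filter_upwards [ae_restrict_mem measurableSet_Ioi] with v hv
    have hv : 0 < v := hv
    have ha1 : 0 < 1 - a := by linarith
    have w0 := wgt_pos θ v hv
    have w1 := wgt_le θ v hθ hv
    have w2 := wgt_mul_le θ v hv
    have e1 : Real.exp (-a * v) ≤ 1 := by rw [Real.exp_le_one_iff]; nlinarith
    have e2 : Real.exp (-v) ≤ Real.exp (-a * v) := Real.exp_le_exp.2 (by nlinarith)
    have q0 : 0 ≤ wgt θ v * (Real.exp (-a * v) - Real.exp (-v)) := mul_nonneg w0.le (by linarith)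
    have q1 : wgt θ v * (Real.exp (-a * v) - Real.exp (-v)) ≤ 1 := by nlinarith
    have d1 : Real.exp (-a * v) - Real.exp (-v) ≤ (1 - a) * (v * Real.exp (-(v / 2))) := by
      have h1 : Real.exp (-v) = Real.exp (-a * v) * Real.exp (-((1 - a) * v)) := by
        rw [← Real.exp_add]; congr 1; ring
      have h2 := Real.add_one_le_exp (-((1 - a) * v))
      have h3 : Real.exp (-a * v) ≤ Real.exp (-(v / 2)) := Real.exp_le_exp.2 (by nlinarith)
      have h4 := Real.exp_pos (-a * v)
      have h5 : 0 < (1 - a) * v := mul_pos ha1 hv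
      rw [h1]
      nlinarith
    have d2 : wgt θ v * (Real.exp (-a * v) - Real.exp (-v)) ≤
        (2 * Real.exp (1 + θ) * min v 1) * (1 - a) := by
      have := mul_le_mul w1 (d1.trans (mul_le_mul_of_nonneg_left (hve v hv) ha1.le)) (by linarith)
        (Real.exp_pos _).le
      linarith
    rw [Real.norm_eq_abs, abs_of_nonneg (by
        have := sub_nonneg.2 q1
        positivity), ← mul_assoc, mul_div_right_comm]
    apply mul_le_mul_of_nonneg_right _ (by positivity)
    rw [div_le_iff₀ ha1]
    nlinarith
  · filter_upwards [ae_restrict_mem measurableSet_Ioi] with v hv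
    have hd : HasDerivAt (fun a : ℝ => Real.exp (-a * v)) (-(v * Real.exp (-v))) 1 := by
      have : HasDerivAt (fun a : ℝ => Real.exp (-a * v)) (Real.exp (-1 * v) * (-1 * v)) 1 :=
        (((hasDerivAt_id (1:ℝ)).neg).mul_const v).exp
      convert this using 1
      ring_nf
    have hs : Tendsto (fun a : ℝ => (Real.exp (-a * v) - Real.exp (-v)) / (1 - a))
        (nhdsWithin 1 (Set.Ico (0 : ℝ) 1)) (nhds (v * Real.exp (-v))) := by
      have h1 := hd.tendsto_slope.mono_left
        (nhdsWithin_mono (1:ℝ) (s := Set.Ico (0 : ℝ) 1) (fun x hx => hx.2.ne))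
      have h2 := h1.neg
      rw [neg_neg] at h2
      refine h2.congr fun a => ?_
      rw [slope_def_field, ← neg_sub a 1, div_neg]
      simp
    have hc : Tendsto (fun a : ℝ => 1 - wgt θ v * (Real.exp (-a * v) - Real.exp (-v)))
        (nhdsWithin 1 (Set.Ico (0 : ℝ) 1)) (nhds 1) := by
      have : Continuous (fun a : ℝ => 1 - wgt θ v * (Real.exp (-a * v) - Real.exp (-v))) := by
        fun_prop
      have := (this.tendsto 1).mono_left (nhdsWithin_le_nhds (s := Set.Ico (0 : ℝ) 1))
      simpa using this
    have := ((hs.const_mul (wgt θ v)).mul hc).mul_const (v ^ (-(τ - 2)))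
    rw [mul_one] at this
    refine this.congr fun a => ?_
    ring

lemma aux_IV_pos (τ : ℝ) (hτ3 : 3 < τ) (hτ4 : τ < 4) :
    0 < ∫ y in Set.Ioi (0 : ℝ), (1 - Real.exp (-y)) * Real.exp (-y) * y ^ (-(τ - 2)) := by
  have hpos : ∀ y : ℝ, 0 < y → 0 < (1 - Real.exp (-y)) * Real.exp (-y) * y ^ (-(τ - 2)) := by
    intro y hy
    have e1 : Real.exp (-y) < 1 := by rw [Real.exp_lt_one_iff]; linarith
    have := sub_pos.2 e1
    positivity
  have hfin : IntegrableOn (fun y : ℝ => (1 - Real.exp (-y)) * Real.exp (-y) * y ^ (-(τ - 2)))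
      (Set.Ioi 0) := by
    refine Integrable.mono' (aux_min_integrable (τ - 2) (by linarith) (by linarith))
      (Measurable.aestronglyMeasurable (by fun_prop)) ?_
    filter_upwards [ae_restrict_mem measurableSet_Ioi] with y hy
    have hy : 0 < y := hy
    rw [Real.norm_eq_abs, abs_of_pos (hpos y hy)]
    apply mul_le_mul_of_nonneg_right _ (by positivity)
    have e1 : Real.exp (-y) < 1 := by rw [Real.exp_lt_one_iff]; linarith
    have := aux_one_sub_exp y
    have := Real.exp_pos (-y)
    nlinarith
  exact aux_pos _ hfin hpos

/-- Lemma 4.4(b), asymptotic variance near the extremities.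
(i) As `a → 1`, `J_V(a) = -(1-a) J_V'(1)(1+o(1))` with `J_V'(1) < 0`;
(ii) as `a → 0`, `I_V(a) = a^{τ-3} 𝓘_V (1+o(1))`, where
`𝓘_V = (τ-1)∫_0^∞ (1-e^{-y}) e^{-y} y^{-(τ-2)} dy`; consequently there are constants
`0 < c̲ < c̄ < ∞` and `ε > 0` with `c̲ a^{τ-3} ≤ I_V(a) ≤ c̄ a^{τ-3}` for all `a ∈ (0,ε]`. -/
theorem IV_JV_near_extremities
    (τ α : ℝ) (hτ : τ ∈ Set.Ioo (3 : ℝ) 4) (hα : α = 1 / (τ - 1))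
    (f : ℝ → ℝ → ℝ)
    (hf : ∀ x θ' : ℝ, f x θ'
      = Real.log (1 + Real.exp (-x ^ (-α)) * (Real.exp (-θ' * x ^ (-α)) - 1))
        + θ' * x ^ (-α) - θ' * x ^ (-(2 * α)))
    (Λ : ℝ → ℝ) (hΛ : ∀ θ', Λ θ' = ∫ x in Set.Ioi (0 : ℝ), f x θ')
    (θstar : ℝ) (hθstar : ∀ θ', Λ θstar ≤ Λ θ')
    (p q : ℝ → ℝ → ℝ)
    (hp : ∀ v a : ℝ, p v a
      = Real.exp (θstar * v) * (1 - Real.exp (-a * v)) /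
          (Real.exp (θstar * v) * (1 - Real.exp (-v)) + Real.exp (-v)))
    (hq : ∀ v a : ℝ, q v a
      = Real.exp (θstar * v) * (Real.exp (-a * v) - Real.exp (-v)) /
          (Real.exp (θstar * v) * (1 - Real.exp (-v)) + Real.exp (-v)))
    (IV JV : ℝ → ℝ)
    (hIV : ∀ a : ℝ, IV a = (τ - 1) * ∫ v in Set.Ioi (0 : ℝ),
      p v a * (1 - p v a) * v ^ (-(τ - 2)))
    (hJV : ∀ a : ℝ, JV a = (τ - 1) * ∫ v in Set.Ioi (0 : ℝ),
      q v a * (1 - q v a) * v ^ (-(τ - 2)))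
    (𝓘V : ℝ)
    (h𝓘V : 𝓘V = (τ - 1) * ∫ y in Set.Ioi (0 : ℝ),
      (1 - Real.exp (-y)) * Real.exp (-y) * y ^ (-(τ - 2))) :
    (derivWithin JV (Set.Icc (0 : ℝ) 1) 1 < 0 ∧
      Tendsto (fun a : ℝ => JV a / (1 - a)) (nhdsWithin 1 (Set.Ico (0 : ℝ) 1))
        (nhds (-(derivWithin JV (Set.Icc (0 : ℝ) 1) 1)))) ∧
    Tendsto (fun a : ℝ => IV a / a ^ (τ - 3)) (nhdsWithin 0 (Set.Ioi (0 : ℝ))) (nhds 𝓘V) ∧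
    ∃ c₁ c₂ ε : ℝ, 0 < c₁ ∧ c₁ < c₂ ∧ 0 < ε ∧
      ∀ a ∈ Set.Ioc (0 : ℝ) ε, c₁ * a ^ (τ - 3) ≤ IV a ∧ IV a ≤ c₂ * a ^ (τ - 3) := by
  have hθ : 0 ≤ θstar := aux_theta τ α hτ hα f hf Λ hΛ θstar hθstar
  obtain ⟨hτ3, hτ4⟩ := hτ
  have hI : ∀ a, IV a = (τ - 1) * ∫ v in Set.Ioi (0 : ℝ),
      (wgt θstar v * (1 - Real.exp (-a * v))) * (1 - wgt θstar v * (1 - Real.exp (-a * v)))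
        * v ^ (-(τ - 2)) := by
    intro a; rw [hIV]; simp only [hp, wgt_div]
  have hJ : ∀ a, JV a = (τ - 1) * ∫ v in Set.Ioi (0 : ℝ),
      (wgt θstar v * (Real.exp (-a * v) - Real.exp (-v))) *
        (1 - wgt θstar v * (Real.exp (-a * v) - Real.exp (-v)))
        * v ^ (-(τ - 2)) := by
    intro a; rw [hJV]; simp only [hq, wgt_div]
  have hIt : Tendsto (fun a : ℝ => IV a / a ^ (τ - 3)) (nhdsWithin 0 (Set.Ioi (0 : ℝ)))
      (nhds 𝓘V) := by
    rw [h𝓘V]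
    refine ((aux_IV τ θstar hτ3 hτ4 hθ).const_mul (τ - 1)).congr fun a => ?_
    rw [hI, mul_div_assoc]
  have hIpos : 0 < 𝓘V := by
    rw [h𝓘V]
    exact mul_pos (by linarith) (aux_IV_pos τ hτ3 hτ4)
  obtain ⟨hLpos, hJt⟩ := aux_JV τ θstar hτ3 hτ4 hθ
  have hJt' := hJt.const_mul (τ - 1)
  have hLpos' := mul_pos (show 0 < τ - 1 by linarith) hLpos
  generalize (τ - 1) * (∫ v in Set.Ioi (0 : ℝ), wgt θstar v * (v * Real.exp (-v)) * v ^ (-(τ - 2)))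
    = L at hJt' hLpos'
  have hJlim : Tendsto (fun a : ℝ => JV a / (1 - a)) (nhdsWithin 1 (Set.Ico (0 : ℝ) 1))
      (nhds L) := by
    refine hJt'.congr fun a => ?_
    rw [hJ, mul_div_assoc]
  have hJ1 : JV 1 = 0 := by
    rw [hJ]; simp
  have hder : HasDerivWithinAt JV (-L) (Set.Icc 0 1) 1 := by
    rw [hasDerivWithinAt_iff_tendsto_slope, show Set.Icc (0 : ℝ) 1 \ {1} = Set.Ico 0 1 from Set.Icc_sdiff_right]
    refine hJlim.neg.congr fun a => ?_
    rw [slope_def_field, hJ1, ← neg_sub a 1, div_neg]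
    simp
  have hdw : derivWithin JV (Set.Icc (0 : ℝ) 1) 1 = -L :=
    hder.derivWithin (uniqueDiffOn_Icc one_pos 1 (by simp))
  refine ⟨⟨by rw [hdw]; linarith, by rw [hdw, neg_neg]; exact hJlim⟩, hIt, ?_⟩
  have hmem := hIt.eventually (Ioo_mem_nhds (show 𝓘V / 2 < 𝓘V by linarith)
    (show 𝓘V < 2 * 𝓘V by linarith))
  obtain ⟨u, hu, hsub⟩ := mem_nhdsGT_iff_exists_Ioc_subset.1 hmem
  refine ⟨𝓘V / 2, 2 * 𝓘V, u, by linarith, by linarith, hu, fun a ha => ?_⟩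
  have h := hsub ha
  have hp0 := Real.rpow_pos_of_pos ha.1 (τ - 3)
  exact ⟨(le_div_iff₀ hp0).1 h.1.le, (div_le_iff₀ hp0).1 h.2.le⟩
end
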